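/- Darboux theorem for homogeneous symplectic forms (even case): let ∇(x) = (w₁x₁,…,w_{2r}x_{2r}) on ℝ^{2r}, let U ⊆ ℝ^{2r} be open, and let ω be a smooth 2-form on U which is closed, nondegenerate at every point, and homogeneous of weight w ∈ ℝ with respect to ∇. Then for every x₀ ∈ U there exist an open neighbourhood V ⊆ U of x₀, real numbers λ₁,…,λᵣ, μ₁,…,μᵣ, and smooth functions q¹,…,qʳ, p₁,…,pᵣ on V whose differentials are linearly independent at every point of V, satisfying Σⱼ wⱼ xⱼ ∂ⱼqⁱ = λᵢ·qⁱ and Σⱼ wⱼ xⱼ ∂ⱼpᵢ = μᵢ·pᵢ on V, such that ω_x(u, v) = Σᵢ (Dpᵢ(x)(u)·Dqⁱ(x)(v) − Dpᵢ(x)(v)·Dqⁱ(x)(u)) for all x ∈ V and u, v ∈ ℝ^{2r}; that is, ω = Σᵢ dpᵢ ∧ dqⁱ in homogeneous Darboux coordinates. -/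

import Mathlib

section
open Set Filter Topology MeasureTheory
open scoped ContDiff
set_option linter.unusedSectionVars false
set_option linter.deprecated false

namespace HD

section nem
variable {E F : Type} [NormedAddCommGroup E] [NormedSpace ℝ E]
  [NormedAddCommGroup F] [NormedSpace ℝ F]

/-- Superposition operator. -/
def nem (f : ℝ × E → F) (hf : Continuous f) (γ : C(Icc (0:ℝ) 1, E)) : C(Icc (0:ℝ) 1, F) :=
  ⟨fun s => f ((s : ℝ), γ s), by fun_prop⟩

@[simp] lemma nem_apply (f : ℝ × E → F) (hf : Continuous f) (γ : C(Icc (0:ℝ) 1, E))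
    (s : Icc (0:ℝ) 1) : nem f hf γ s = f ((s : ℝ), γ s) := rfl

lemma continuous_nem (f : ℝ × E → F) (hf : Continuous f) : Continuous (nem f hf) := by
  apply ContinuousMap.continuous_of_continuous_uncurry
  simp only [Function.uncurry_def, nem_apply]
  fun_prop

/-- pointwise application -/
noncomputable def Bop : C(Icc (0:ℝ) 1, E →L[ℝ] F) →L[ℝ] C(Icc (0:ℝ) 1, E) →L[ℝ] C(Icc (0:ℝ) 1, F) :=
  LinearMap.mkContinuous₂
    (LinearMap.mk₂ ℝ (fun (a : C(Icc (0:ℝ) 1, E →L[ℝ] F)) (h : C(Icc (0:ℝ) 1, E)) => (⟨fun s => a s (h s), by fun_prop⟩ : C(Icc (0:ℝ) 1, F)))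
      (by intros; ext; simp) (by intros; ext; simp) (by intros; ext; simp) (by intros; ext; simp))
    1 (by
      intro a h
      rw [ContinuousMap.norm_le _ (by positivity)]
      intro s
      simp only [LinearMap.mk₂_apply, ContinuousMap.coe_mk, one_mul]
      exact (a s).le_of_opNorm_le_of_le (a.norm_coe_le_norm s) (h.norm_coe_le_norm s))

@[simp] lemma Bop_apply (a : C(Icc (0:ℝ) 1, E →L[ℝ] F)) (h : C(Icc (0:ℝ) 1, E)) (s : Icc (0:ℝ) 1) :
    Bop a h s = a s (h s) := rfl

lemma contDiff_Bop (n : WithTop ℕ∞) :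
    ContDiff ℝ n (fun a => (Bop a : C(Icc (0:ℝ) 1, E) →L[ℝ] C(Icc (0:ℝ) 1, F))) := by
  fun_prop

/-- partial derivative in the second variable -/
noncomputable def D2 (f : ℝ × E → F) (p : ℝ × E) : E →L[ℝ] F :=
  (fderiv ℝ f p).comp (ContinuousLinearMap.inr ℝ ℝ E)

lemma D2_contDiff {f : ℝ × E → F} (hf : ContDiff ℝ ∞ f) : ContDiff ℝ ∞ (D2 f) := by
  unfold D2
  exact (hf.fderiv_right (m := ∞) (by simp)).clm_comp contDiff_const

lemma hasFDerivAt_D2 {f : ℝ × E → F} (hf : ContDiff ℝ ∞ f) (s : ℝ) (x : E) :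
    HasFDerivAt (fun y => f (s, y)) (D2 f (s, x)) x := by
  have h1 : HasFDerivAt f (fderiv ℝ f (s, x)) (s, x) :=
    (hf.differentiable (by simp) (s,x)).hasFDerivAt
  exact h1.comp x (hasFDerivAt_prodMk_right s x)

lemma hasFDerivAt_nem {f : ℝ × E → F} (hf : ContDiff ℝ ∞ f) (γ : C(Icc (0:ℝ) 1, E)) :
    HasFDerivAt (nem f hf.continuous) (Bop (nem (D2 f) (D2_contDiff hf).continuous γ)) γ := by
  rw [hasFDerivAt_iff_isLittleO_nhds_zero, Asymptotics.isLittleO_iff]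
  intro ε hε
  have hc := (continuous_nem (D2 f) (D2_contDiff hf).continuous).continuousAt (x := γ)
  rw [Metric.continuousAt_iff] at hc
  obtain ⟨δ, hδ, hc⟩ := hc ε hε
  filter_upwards [Metric.ball_mem_nhds (0 : C(Icc (0:ℝ) 1, E)) hδ] with h hh
  rw [ContinuousMap.norm_le _ (by positivity)]
  intro s
  have hhs : ‖h s‖ < δ := lt_of_le_of_lt (h.norm_coe_le_norm s) (by simpa using hh)
  have key := (convex_ball (γ s) δ).norm_image_sub_le_of_norm_hasFDerivWithin_le'
    (f := fun y => f ((s:ℝ), y)) (f' := fun y => D2 f ((s:ℝ), y)) (φ := D2 f ((s:ℝ), γ s)) (C := ε)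
    (x := γ s) (y := γ s + h s)
    (fun y _ => (hasFDerivAt_D2 hf s y).hasFDerivWithinAt)
    (by
      intro y hy
      have h1 := @hc (γ + ContinuousMap.const _ (y - γ s)) (by
        rw [dist_eq_norm, add_sub_cancel_left]
        refine lt_of_le_of_lt ((ContinuousMap.norm_le _ (norm_nonneg (y - γ s))).2 (fun _ => le_rfl)) ?_
        simpa [dist_eq_norm] using hy)
      have h2 := (ContinuousMap.dist_apply_le_dist s).trans h1.le
      simpa [dist_eq_norm] using h2)
    (Metric.mem_ball_self hδ) (by simpa using hhs)
  simp only [add_sub_cancel_left] at key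
  refine le_trans ?_ (key.trans (mul_le_mul_of_nonneg_left (h.norm_coe_le_norm s) hε.le))
  simp

lemma contDiff_nem_nat (n : ℕ) : ∀ {F : Type} [NormedAddCommGroup F] [NormedSpace ℝ F]
    {f : ℝ × E → F} (hf : ContDiff ℝ ∞ f), ContDiff ℝ n (nem f hf.continuous) := by
  induction n with
  | zero => intro F _ _ f hf; exact contDiff_zero.2 (continuous_nem _ _)
  | succ n ih =>
    intro F _ _ f hf
    rw [Nat.cast_add, Nat.cast_one]
    rw [contDiff_succ_iff_hasFDerivAt]
    exact ⟨fun γ => Bop (nem (D2 f) (D2_contDiff hf).continuous γ),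
      (contDiff_Bop n).comp (ih (D2_contDiff hf)), fun γ => hasFDerivAt_nem hf γ⟩

lemma contDiff_nem {f : ℝ × E → F} (hf : ContDiff ℝ ∞ f) : ContDiff ℝ ∞ (nem f hf.continuous) :=
  contDiff_infty.2 fun n => contDiff_nem_nat n hf

end nem

section volterra
variable {E : Type} [NormedAddCommGroup E] [NormedSpace ℝ E]

/-- extension of a path to the line -/
noncomputable def pext (γ : C(Icc (0:ℝ) 1, E)) (s : ℝ) : E := γ (projIcc 0 1 zero_le_one s)

lemma continuous_pext (γ : C(Icc (0:ℝ) 1, E)) : Continuous (pext γ) :=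
  γ.continuous.comp continuous_projIcc

lemma pext_of_mem (γ : C(Icc (0:ℝ) 1, E)) {s : ℝ} (hs : s ∈ Icc (0:ℝ) 1) : pext γ s = γ ⟨s, hs⟩ := by
  simp [pext, projIcc_of_mem _ hs]

lemma norm_pext_le (γ : C(Icc (0:ℝ) 1, E)) (s : ℝ) : ‖pext γ s‖ ≤ ‖γ‖ := γ.norm_coe_le_norm _

variable [CompleteSpace E]

/-- Volterra operator -/
noncomputable def J : C(Icc (0:ℝ) 1, E) →L[ℝ] C(Icc (0:ℝ) 1, E) :=
  LinearMap.mkContinuous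
    { toFun := fun γ => ⟨fun t => ∫ s in (0:ℝ)..t, pext γ s,
        (intervalIntegral.continuous_primitive
          (fun a b => (continuous_pext γ).intervalIntegrable a b) 0).comp continuous_subtype_val⟩
      map_add' := by
        intro a b
        ext t
        simp only [ContinuousMap.coe_mk, ContinuousMap.add_apply]
        rw [← intervalIntegral.integral_add ((continuous_pext a).intervalIntegrable _ _)
          ((continuous_pext b).intervalIntegrable _ _)]
        rfl
      map_smul' := by
        intro c a
        ext t
        simp only [ContinuousMap.coe_mk, ContinuousMap.smul_apply, RingHom.id_apply]
        rw [← intervalIntegral.integral_smul]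
        rfl }
    1 (by
      intro γ
      rw [ContinuousMap.norm_le _ (by positivity)]
      intro t
      have := intervalIntegral.norm_integral_le_of_norm_le_const (a := 0) (b := (t:ℝ)) (f := pext γ)
        (C := ‖γ‖) (fun s _ => norm_pext_le γ s)
      refine this.trans ?_
      rw [sub_zero, abs_of_nonneg t.2.1, one_mul]
      exact mul_le_of_le_one_right (norm_nonneg _) t.2.2)

lemma J_apply (γ : C(Icc (0:ℝ) 1, E)) (t : Icc (0:ℝ) 1) :
    J γ t = ∫ s in (0:ℝ)..t, pext γ s := rfl

lemma hasDerivAt_pext_J (γ : C(Icc (0:ℝ) 1, E)) {s : ℝ} (hs : s ∈ Icc (0:ℝ) 1) :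
    HasDerivWithinAt (pext (J γ)) (pext γ s) (Icc 0 1) s := by
  have h := (continuous_pext γ).integral_hasStrictDerivAt 0 s
  refine h.hasDerivAt.hasDerivWithinAt.congr (fun y hy => ?_) ?_
  · rw [pext_of_mem _ hy]; rfl
  · rw [pext_of_mem _ hs]; rfl

end volterra
end HD

namespace HD
section flow
variable {E F : Type} [NormedAddCommGroup E] [NormedSpace ℝ E] 
 [NormedAddCommGroup F] [NormedSpace ℝ F]

/-- constant paths -/
noncomputable def cst : E →L[ℝ] C(Icc (0:ℝ) 1, E) :=
  LinearMap.mkContinuous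
    { toFun := fun x => ContinuousMap.const _ x
      map_add' := by intros; ext; rfl
      map_smul' := by intros; ext; rfl } 1 (by
        intro x
        rw [ContinuousMap.norm_le _ (by positivity)]
        intro s; simp)

@[simp] lemma cst_apply (x : E) (s : Icc (0:ℝ) 1) : cst x s = x := rfl

/-- evaluation -/
noncomputable def evl (s : Icc (0:ℝ) 1) : C(Icc (0:ℝ) 1, E) →L[ℝ] E :=
  ContinuousMap.evalCLM ℝ s

@[simp] lemma evl_apply (s : Icc (0:ℝ) 1) (γ : C(Icc (0:ℝ) 1, E)) : evl s γ = γ s := rfl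

variable [CompleteSpace E] [CompleteSpace F]

lemma contDiff_J : ContDiff ℝ ∞ (fun γ : C(Icc (0:ℝ) 1, E) => J γ) := by fun_prop

lemma contDiff_cst : ContDiff ℝ ∞ (fun x : E => cst x) := by fun_prop

lemma hasFDerivAt_cst (x : E) : HasFDerivAt (fun x : E => cst x) cst x :=
  ContinuousLinearMap.hasFDerivAt (E := E) (F := C(Icc (0:ℝ) 1, E)) (𝕜 := ℝ) cst

lemma contDiff_evl (s : Icc (0:ℝ) 1) :
    ContDiff ℝ ∞ (fun γ : C(Icc (0:ℝ) 1, E) => evl s γ) := by fun_prop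

lemma hasFDerivAt_J (x : C(Icc (0:ℝ) 1, E)) :
    HasFDerivAt (fun x : C(Icc (0:ℝ) 1, E) => J x) J x :=
  ContinuousLinearMap.hasFDerivAt (E := C(Icc (0:ℝ) 1, E)) (F := C(Icc (0:ℝ) 1, E)) (𝕜 := ℝ) J

lemma hasFDerivAt_evl (s : Icc (0:ℝ) 1) (x : C(Icc (0:ℝ) 1, E)) :
    HasFDerivAt (fun x : C(Icc (0:ℝ) 1, E) => evl s x) (evl s) x :=
  ContinuousLinearMap.hasFDerivAt (E := C(Icc (0:ℝ) 1, E)) (F := E) (𝕜 := ℝ) (evl s)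

theorem flow {f : ℝ × E → E} (hf : ContDiff ℝ ∞ f) (x₀ : E) (h0 : ∀ s ∈ Icc (0:ℝ) 1, f (s,x₀) = 0)
    (h1 : ∀ s ∈ Icc (0:ℝ) 1, D2 f (s,x₀) = 0) :
    ∃ V : Set E, IsOpen V ∧ x₀ ∈ V ∧ ∃ Φ : E → C(Icc (0:ℝ) 1, E), ContDiffOn ℝ ∞ Φ V ∧
      Φ x₀ = cst x₀ ∧ ∀ x ∈ V, Φ x = cst x + J (nem f hf.continuous (Φ x)) ∧
      ∀ u, fderiv ℝ Φ x u =
        cst u + J (Bop (nem (D2 f) (D2_contDiff hf).continuous (Φ x)) (fderiv ℝ Φ x u)) := by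
  set N := nem f hf.continuous with hN
  set G : C(Icc (0:ℝ) 1, E) → C(Icc (0:ℝ) 1, E) := fun γ => γ - J (N γ) with hG
  have hNs : ContDiff ℝ ∞ N := contDiff_nem hf
  have hGs : ContDiff ℝ ∞ G := contDiff_id.sub (contDiff_J.comp hNs)
  have hN0 : N (cst x₀) = 0 := by ext s; simp [hN, h0 s s.2]
  have hG0 : G (cst x₀) = cst x₀ := by simp [hG, hN0]
  have hd : HasFDerivAt G ((ContinuousLinearEquiv.refl ℝ C(Icc (0:ℝ) 1, E) :
      C(Icc (0:ℝ) 1, E) ≃L[ℝ] C(Icc (0:ℝ) 1, E)) : C(Icc (0:ℝ) 1, E) →L[ℝ] C(Icc (0:ℝ) 1, E)) (cst x₀) := by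
    have h := (hasFDerivAt_id (cst x₀)).sub ((hasFDerivAt_J _).comp (cst x₀) (hasFDerivAt_nem hf (cst x₀)))
    have hz : nem (D2 f) (D2_contDiff hf).continuous (cst x₀) = 0 := by
      ext1 s; simp [h1 s s.2]
    rw [hz, map_zero, ContinuousLinearMap.comp_zero, sub_zero] at h
    exact h
  set e := hGs.contDiffAt.toOpenPartialHomeomorph G hd (by simp) with he
  have hecoe : ∀ γ, e γ = G γ := fun γ => rfl
  have hmem : cst x₀ ∈ e.source := ContDiffAt.mem_toOpenPartialHomeomorph_source _ hd (by simp)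
  set R : Set (C(Icc (0:ℝ) 1, E)) := (fderiv ℝ G) ⁻¹' (range ((↑) : (C(Icc (0:ℝ) 1, E) ≃L[ℝ] C(Icc (0:ℝ) 1, E)) → 
    (C(Icc (0:ℝ) 1, E) →L[ℝ] C(Icc (0:ℝ) 1, E)))) with hR
  have hRo : IsOpen R := (ContinuousLinearEquiv.isOpen).preimage (hGs.continuous_fderiv (by simp))
  have hR0 : cst x₀ ∈ R := ⟨_, hd.fderiv.symm⟩
  have hst : e.symm (cst x₀) = cst x₀ := by
    have := e.left_inv hmem
    rwa [hecoe, hG0] at this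
  set V : Set E := cst ⁻¹' (e.target ∩ e.symm ⁻¹' R) with hV
  have hVo : IsOpen V := (e.symm.isOpen_inter_preimage hRo).preimage cst.continuous
  have hVs : ContDiffOn ℝ ∞ (fun x => e.symm (cst x)) V := by
    intro x hx
    obtain ⟨e', he'⟩ := hx.2
    have h2 : ContDiffAt ℝ ∞ e.symm (cst x) :=
      e.contDiffAt_symm hx.1 (f₀' := e') (by
        rw [he']
        exact (hGs.differentiable (by simp) _).hasFDerivAt) hGs.contDiffAt
    exact (h2.comp x contDiff_cst.contDiffAt).contDiffWithinAt
  have heq : ∀ x ∈ V, e.symm (cst x) = cst x + J (N (e.symm (cst x))) := by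
    intro x hx
    have := e.right_inv hx.1
    rw [hecoe] at this
    simp only [hG] at this
    rw [sub_eq_iff_eq_add] at this
    exact this
  refine ⟨V, hVo, ⟨?_, ?_⟩, fun x => e.symm (cst x), hVs, hst, fun x hx => ⟨heq x hx, fun u => ?_⟩⟩
  · have := e.map_source hmem
    rwa [hecoe, hG0] at this
  · simpa only [mem_preimage, hst] using hR0
  · have hdx : HasFDerivAt (fun x => e.symm (cst x)) (fderiv ℝ (fun x => e.symm (cst x)) x) x :=
      ((hVs.contDiffAt (hVo.mem_nhds hx)).differentiableAt (by simp)).hasFDerivAt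
    have h3 : HasFDerivAt (fun x => e.symm (cst x)) (cst + J.comp
        ((Bop (nem (D2 f) (D2_contDiff hf).continuous (e.symm (cst x)))).comp
          (fderiv ℝ (fun x => e.symm (cst x)) x))) x := by
      refine HasFDerivAt.congr_of_eventuallyEq ?_ (eventually_of_mem (hVo.mem_nhds hx) heq)
      exact (hasFDerivAt_cst _).add ((hasFDerivAt_J _).comp x ((hasFDerivAt_nem hf _).comp x hdx))
    have h4 := congrArg (fun T => T u) (hdx.unique h3)
    simpa using h4

/-- parametric integral -/
theorem paramInt {A : ℝ × E → F} (hA : ContDiff ℝ ∞ A) :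
    ContDiff ℝ ∞ (fun x => ∫ s in (0:ℝ)..1, A (s, x)) ∧
    ∀ x u, fderiv ℝ (fun x => ∫ s in (0:ℝ)..1, A (s, x)) x u = ∫ s in (0:ℝ)..1, D2 A (s, x) u := by
  have key : ∀ {H : Type} [NormedAddCommGroup H] [NormedSpace ℝ H] [CompleteSpace H] 
      (B : ℝ → H) (γ : C(Icc (0:ℝ) 1, H)) (h : ∀ s : Icc (0:ℝ) 1, γ s = B s), 
      ∫ s in (0:ℝ)..1, B s = evl ⟨1, by simp⟩ (J γ) := by
    intro H _ _ _ B γ h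
    rw [evl_apply, J_apply]
    refine intervalIntegral.integral_congr fun s hs => ?_
    rw [uIcc_of_le zero_le_one] at hs
    rw [pext_of_mem _ hs, h]
  have h1 : (fun x => ∫ s in (0:ℝ)..1, A (s, x)) =
      fun x => evl ⟨1, by simp⟩ (J (nem A hA.continuous (cst x))) := by
    funext x
    exact key _ _ (fun s => rfl)
  rw [h1]
  refine ⟨(contDiff_evl _).comp (contDiff_J.comp ((contDiff_nem hA).comp contDiff_cst)), fun x u => ?_⟩
  have h2 := (hasFDerivAt_evl (E := F) ⟨1, by simp⟩ _).comp x ((hasFDerivAt_J _).comp x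
    ((hasFDerivAt_nem hA (cst x)).comp x (hasFDerivAt_cst _)))
  have h3 := congrArg (fun T => T u) h2.fderiv
  refine h3.trans ?_
  symm
  exact key _ _ (fun s => rfl)

end flow
end HD

namespace HD
section extend
variable {E F : Type} [NormedAddCommGroup E] [NormedSpace ℝ E] [FiniteDimensional ℝ E]
 [NormedAddCommGroup F] [NormedSpace ℝ F]

open scoped Manifold in
lemma extend {f : E → F} {O K : Set E} (hO : IsOpen O) (hf : ContDiffOn ℝ ∞ f O) (hK : IsClosed K)
    (hKO : K ⊆ O) : ∃ g : E → F, ContDiff ℝ ∞ g ∧ ∀ᶠ x in 𝓝ˢ K, g x = f x := by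
  obtain ⟨χ, h0, h1, -⟩ := exists_contMDiffMap_zero_one_nhds_of_isClosed (n := ⊤) 𝓘(ℝ, E)
    hO.isClosed_compl hK (by rwa [← subset_compl_iff_disjoint_left, compl_compl])
  have hχ : ContDiff ℝ ∞ χ := χ.contMDiff.contDiff
  refine ⟨fun x => χ x • f x, ?_, ?_⟩
  · rw [contDiff_iff_contDiffAt]
    intro x
    by_cases hx : x ∈ O
    · exact hχ.contDiffAt.smul (hf.contDiffAt (hO.mem_nhds hx))
    · have : ∀ᶠ y in 𝓝 x, χ y = 0 := (eventually_nhdsSet_iff_forall.1 h0) x hx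
      refine (contDiffAt_const (c := (0:F))).congr_of_eventuallyEq ?_
      filter_upwards [this] with y hy
      simp [hy]
  · filter_upwards [h1] with x hx
    simp [hx]

lemma extend_pt {f : E → F} {O : Set E} {x : E} (hO : IsOpen O) (hf : ContDiffOn ℝ ∞ f O)
    (hx : x ∈ O) : ∃ g : E → F, ContDiff ℝ ∞ g ∧ g =ᶠ[𝓝 x] f := by
  obtain ⟨g, h1, h2⟩ := extend hO hf (isClosed_singleton (x := x)) (by simpa using hx)
  exact ⟨g, h1, by simpa [Filter.EventuallyEq] using h2⟩

end extend

section lin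

/-- diagonal operator -/
noncomputable def Wd {m : ℕ} (w : Fin m → ℝ) : (Fin m → ℝ) →L[ℝ] (Fin m → ℝ) :=
  ContinuousLinearMap.pi fun j => w j • ContinuousLinearMap.proj j

lemma Wd_apply {m : ℕ} (w : Fin m → ℝ) (x : Fin m → ℝ) : Wd w x = fun j => w j * x j := rfl

lemma Wd_single {m : ℕ} (w : Fin m → ℝ) (j : Fin m) :
    Wd w (Pi.single j 1) = w j • Pi.single j (1:ℝ) := by
  ext i
  rw [Wd_apply]
  by_cases h : i = j
  · subst h; simp
  · simp [h]

lemma linNormal {m : ℕ} (w : Fin m → ℝ) (wt : ℝ) : ∀ (r : ℕ) (S : Finset (Fin m))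
    (Ω : (Fin m → ℝ) →L[ℝ] (Fin m → ℝ) →L[ℝ] ℝ), S.card = 2 * r →
    (∀ u v, Ω u v = - Ω v u) →
    (∀ u v, Ω (Wd w u) v + Ω u (Wd w v) = wt * Ω u v) →
    (∀ j, j ∉ S → Ω (Pi.single j 1) = 0) →
    (∀ u : Fin m → ℝ, (∀ j, j ∉ S → u j = 0) → (∀ v, Ω u v = 0) → u = 0) →
    ∃ (lam mu : Fin r → ℝ) (q p : Fin r → ((Fin m → ℝ) →L[ℝ] ℝ)),
      (∀ i, mu i + lam i = wt) ∧ (∀ i u, q i (Wd w u) = lam i * q i u) ∧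
      (∀ i u, p i (Wd w u) = mu i * p i u) ∧
      ∀ u v, Ω u v = ∑ i, (p i u * q i v - p i v * q i u) := by
  intro r
  induction r with
  | zero =>
    intro S Ω hS halt heq hker hnd
    have hS' : S = ∅ := Finset.card_eq_zero.1 (by simpa using hS)
    subst hS'
    refine ⟨fun _ => 0, fun _ => 0, fun _ => 0, fun _ => 0, fun i => i.elim0, fun i => i.elim0,
      fun i => i.elim0, fun u v => ?_⟩
    have : u = ∑ j, u j • Pi.single j (1:ℝ) := by
      simpa [Pi.single_apply] using pi_eq_sum_univ' u
    rw [this, map_sum]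
    simp [hker]
  | succ r ih =>
    intro S Ω hS halt heq hker hnd
    obtain ⟨j, hj⟩ : S.Nonempty := Finset.card_pos.1 (by omega)
    obtain ⟨k, hk⟩ : ∃ k, Ω (Pi.single j 1) (Pi.single k 1) ≠ 0 := by
      by_contra! hcon
      have h1 : (Pi.single j 1 : Fin m → ℝ) = 0 := by
        apply hnd
        · intro i hi
          have : i ≠ j := fun h => hi (h ▸ hj)
          simp [this]
        · intro v
          have : v = ∑ j, v j • Pi.single j (1:ℝ) := by
            simpa [Pi.single_apply] using pi_eq_sum_univ' v
          rw [this, map_sum]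
          simp [hcon]
      have := congrFun h1 j
      simp at this
    set ej : Fin m → ℝ := Pi.single j 1 with hej
    set ek : Fin m → ℝ := Pi.single k 1 with hek
    set c := Ω ej ek with hc
    have hself : ∀ u, Ω u u = 0 := fun u => by have := halt u u; linarith
    have hkj : k ≠ j := by
      rintro rfl
      exact hk (hself _)
    have hkS : k ∈ S := by
      by_contra h
      apply hk
      rw [hc, halt, hker k h]; simp
    have hWj : ∀ u, Ω ej (Wd w u) = (wt - w j) * Ω ej u := by
      intro u
      have := heq ej u
      rw [hej, Wd_single, ← hej] at this
      simp only [map_smul, ContinuousLinearMap.smul_apply, smul_eq_mul] at this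
      linarith
    have hWk : ∀ u, Ω ek (Wd w u) = (wt - w k) * Ω ek u := by
      intro u
      have := heq ek u
      rw [hek, Wd_single, ← hek] at this
      simp only [map_smul, ContinuousLinearMap.smul_apply, smul_eq_mul] at this
      linarith
    have hwjk : w j + w k = wt := by
      have h1 := hWj ek
      rw [hek, Wd_single, ← hek] at h1
      simp only [map_smul, smul_eq_mul] at h1
      have h2 : (w j + w k - wt) * c = 0 := by rw [hc]; linarith
      rcases mul_eq_zero.1 h2 with h | h
      · linarith
      · exact absurd h hk
    set p := c⁻¹ • Ω ej with hp
    set q := Ω ek with hq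
    have hpv : ∀ v, p v = c⁻¹ * Ω ej v := fun v => rfl
    have hqj : q ej = -c := by rw [hq, halt]
    have hqk : q ek = 0 := hself _
    have hpj : p ej = 0 := by rw [hpv, hself, mul_zero]
    have hpk : p ek = 1 := by rw [hpv]; exact inv_mul_cancel₀ hk
    set Ω' := Ω - (p.smulRight q - q.smulRight p) with hΩ'
    have hv : ∀ u v, Ω' u v = Ω u v - (p u * q v - p v * q u) := by
      intro u v
      simp only [hΩ', ContinuousLinearMap.sub_apply, ContinuousLinearMap.smulRight_apply,
        ContinuousLinearMap.smul_apply, smul_eq_mul]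
      ring
    have hpW : ∀ u, p (Wd w u) = (wt - w j) * p u := by
      intro u; rw [hpv, hpv, hWj]; ring
    obtain ⟨lam, mu, q', p', g1, g2, g3, g4⟩ := ih ((S.erase j).erase k) Ω' (by
        rw [Finset.card_erase_of_mem (Finset.mem_erase.2 ⟨hkj, hkS⟩), Finset.card_erase_of_mem hj]
        omega)
      (by intro u v; rw [hv, hv, halt u v]; ring)
      (by
        intro u v
        rw [hv, hv, hv, hpW, hpW, hWk, hWk]
        have := heq u v
        have e : wt - w j + (wt - w k) = wt := by linarith
        linear_combination this - (p u * q v - p v * q u) * e)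
      (by
        intro i hi
        ext v
        rw [hv]
        by_cases hij : i = j
        · subst hij
          rw [← hej, hpj, hqj, hpv]
          field_simp
          simp
        · by_cases hik : i = k
          · subst hik
            rw [← hek, hpk, hqk]
            simp [hq]
          · have hiS : i ∉ S := fun h => hi (by simp [h, hij, hik])
            have h1 := hker i hiS
            have h2 : ∀ x, Ω x (Pi.single i 1) = 0 := by
              intro x; rw [halt, h1]; simp
            rw [h1, hpv (Pi.single i 1), hq, h2, h2]
            simp)
      (by
        intro u hu hz
        have hu' : ∀ i, i ∉ S → u i = 0 := fun i hi => hu i (by simp [hi])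
        have huj : u j = 0 := hu j (by simp)
        have huk : u k = 0 := hu k (by simp)
        have h1 : u - p u • ek + (c⁻¹ * q u) • ej = 0 := by
          apply hnd
          · intro i hi
            have h1 : i ≠ j := fun h => hi (h ▸ hj)
            have h2 : i ≠ k := fun h => hi (h ▸ hkS)
            simp [hej, hek, h1, h2, hu' i hi]
          · intro v
            have := hz v
            rw [hv, hpv v] at this
            simp only [map_add, map_sub, map_smul, ContinuousLinearMap.add_apply,
              ContinuousLinearMap.sub_apply, ContinuousLinearMap.smul_apply, smul_eq_mul, ← hq]
            linarith
        have h2 := congrFun h1 j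
        have h3 := congrFun h1 k
        simp [hej, hek, huj, huk, hkj, hkj.symm] at h2 h3
        rw [h3] at h1
        have h4 : c⁻¹ * q u = 0 := by rcases h2 with h | h <;> simp [h]
        rw [h4] at h1
        simpa using h1)
    refine ⟨Fin.cons (wt - w k) lam, Fin.cons (wt - w j) mu, Fin.cons q q', Fin.cons p p', ?_, ?_, ?_, ?_⟩
    · intro i
      refine Fin.cases ?_ (fun i => ?_) i
      · simp; linarith
      · simpa using g1 i
    · intro i
      refine Fin.cases ?_ (fun i => ?_) i
      · simpa using hWk
      · simpa using g2 i
    · intro i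
      refine Fin.cases ?_ (fun i => ?_) i
      · simpa using hpW
      · simpa using g3 i
    · intro u v
      rw [Fin.sum_univ_succ]
      simp only [Fin.cons_zero, Fin.cons_succ]
      rw [← g4, hv]
      ring

lemma linIndep {r : ℕ} (q p : Fin r → ((Fin (2 * r) → ℝ) →L[ℝ] ℝ))
    (h : ∀ v, (∀ i, q i v = 0) → (∀ i, p i v = 0) → v = 0) :
    LinearIndependent ℝ (Sum.elim q p : Fin r ⊕ Fin r → (Fin (2 * r) → ℝ) →L[ℝ] ℝ) := by
  set b := (Sum.elim q p : Fin r ⊕ Fin r → (Fin (2 * r) → ℝ) →L[ℝ] ℝ) with hb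
  let T : (Fin (2 * r) → ℝ) →ₗ[ℝ] (Fin r ⊕ Fin r → ℝ) :=
    LinearMap.pi fun i => (b i : (Fin (2 * r) → ℝ) →ₗ[ℝ] ℝ)
  have hT : ∀ v i, T v i = b i v := fun v i => rfl
  have hinj : Function.Injective T := by
    rw [← LinearMap.ker_eq_bot, LinearMap.ker_eq_bot']
    intro v hv
    apply h
    · intro i; exact congrFun hv (Sum.inl i)
    · intro i; exact congrFun hv (Sum.inr i)
  have hsur : Function.Surjective T :=
    (LinearMap.injective_iff_surjective_of_finrank_eq_finrank (by simp; ring)).1 hinj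
  rw [Fintype.linearIndependent_iff]
  intro g hg i
  obtain ⟨v, hv⟩ := hsur (Pi.single i 1)
  have h1 := congrArg (fun f => f v) hg
  simp only [ContinuousLinearMap.sum_apply, ContinuousLinearMap.smul_apply, ← hT, hv] at h1
  simpa [Pi.single_apply] using h1

end lin
end HD

namespace HD
section helpers
variable {E X F : Type} [NormedAddCommGroup E] [NormedSpace ℝ E]
  [NormedAddCommGroup X] [NormedSpace ℝ X] [NormedAddCommGroup F] [NormedSpace ℝ F]

lemma symm2 {c : E → F} (hc : ContDiff ℝ ∞ c) (x u v : E) :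
    fderiv ℝ (fderiv ℝ c) x u v = fderiv ℝ (fderiv ℝ c) x v u := by
  have h : (2 : WithTop ℕ∞) ≤ ∞ := WithTop.coe_le_coe.2 (le_top : (2 : ℕ∞) ≤ ⊤)
  exact (hc.contDiffAt.isSymmSndFDerivAt (by simpa using h)) u v

lemma comp_f {S : E → F} {S' : E →L[ℝ] F} {g : X → E} {g' : X →L[ℝ] E} {x : X}
    (hS : HasFDerivAt S S' (g x)) (hg : HasFDerivAt g g' x) :
    HasFDerivAt (fun y => S (g y)) (S'.comp g') x := hS.comp x hg

lemma comp_d {S : E → F} {S' : E →L[ℝ] F} {g : ℝ → E} {g' : E} {x : ℝ} {s : Set ℝ}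
    (hS : HasFDerivAt S S' (g x)) (hg : HasDerivWithinAt g g' s x) :
    HasDerivWithinAt (fun y => S (g y)) (S' g') s x := hS.comp_hasDerivWithinAt x hg

lemma tri_fderiv {S : X → E →L[ℝ] E →L[ℝ] ℝ} {a b : X → E} {S' : X →L[ℝ] E →L[ℝ] E →L[ℝ] ℝ}
    {a' b' : X →L[ℝ] E} {x : X} (hS : HasFDerivAt S S' x) (ha : HasFDerivAt a a' x)
    (hb : HasFDerivAt b b' x) : ∃ T : X →L[ℝ] ℝ, HasFDerivAt (fun x => S x (a x) (b x)) T x ∧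
      ∀ u, T u = S' u (a x) (b x) + S x (a' u) (b x) + S x (a x) (b' u) := by
  have h1 : HasFDerivAt (fun x => S x (a x)) _ x := hS.clm_apply ha
  have h2 : HasFDerivAt (fun x => S x (a x) (b x)) _ x := h1.clm_apply hb
  refine ⟨_, h2, fun u => ?_⟩
  simp
  ring

lemma tri_deriv {S : ℝ → E →L[ℝ] E →L[ℝ] ℝ} {a b : ℝ → E} {S' : E →L[ℝ] E →L[ℝ] ℝ}
    {a' b' : E} {x : ℝ} {s : Set ℝ} (hS : HasDerivWithinAt S S' s x) (ha : HasDerivWithinAt a a' s x)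
    (hb : HasDerivWithinAt b b' s x) : HasDerivWithinAt (fun x => S x (a x) (b x))
      (S' (a x) (b x) + S x a' (b x) + S x (a x) b') s x := by
  have h1 : HasDerivWithinAt (fun x => S x (a x)) _ s x := hS.clm_apply ha
  have h2 : HasDerivWithinAt (fun x => S x (a x) (b x)) _ s x := h1.clm_apply hb
  simpa using h2

/-- one-form version -/
lemma duo_fderiv {S : X → E →L[ℝ] F} {a : X → E} {S' : X →L[ℝ] E →L[ℝ] F}
    {a' : X →L[ℝ] E} {x : X} (hS : HasFDerivAt S S' x) (ha : HasFDerivAt a a' x) :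
    ∃ T : X →L[ℝ] F, HasFDerivAt (fun x => S x (a x)) T x ∧
      ∀ u, T u = S' u (a x) + S x (a' u) := by
  have h1 : HasFDerivAt (fun x => S x (a x)) _ x := hS.clm_apply ha
  refine ⟨_, h1, fun u => ?_⟩
  simp
  rw [add_comm]

end helpers

section prim
variable {E : Type} [NormedAddCommGroup E] [NormedSpace ℝ E] [CompleteSpace E]

set_option maxHeartbeats 1000000 in
theorem primitive (W : E →L[ℝ] E) (wt : ℝ) (x₀ : E) (σ : E → E →L[ℝ] E →L[ℝ] ℝ) (c : E → E)
    (hσ : ContDiff ℝ ∞ σ) (hc : ContDiff ℝ ∞ c)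
    (halt : ∀ᶠ x in 𝓝 x₀, ∀ u v, σ x u v = - σ x v u)
    (hcl : ∀ᶠ x in 𝓝 x₀, ∀ u v z,
      fderiv ℝ σ x u v z + fderiv ℝ σ x v z u + fderiv ℝ σ x z u v = 0)
    (hhom : ∀ᶠ x in 𝓝 x₀, ∀ u v,
      fderiv ℝ σ x (W x) u v + σ x (W u) v + σ x u (W v) = wt * σ x u v)
    (h0 : σ x₀ = 0) (hc0 : c x₀ = x₀) (hcW : ∀ᶠ x in 𝓝 x₀, fderiv ℝ c x (W x) = W (c x))
    (hcc : ∀ᶠ x in 𝓝 x₀, ∀ u v, σ (c x) (fderiv ℝ c x u) (fderiv ℝ c x v) = 0) :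
    ∃ α : E → E →L[ℝ] ℝ, ContDiff ℝ ∞ α ∧ α x₀ = 0 ∧ fderiv ℝ α x₀ = 0 ∧
      (∀ᶠ x in 𝓝 x₀, ∀ u v, fderiv ℝ α x u v - fderiv ℝ α x v u = σ x u v) ∧
      (∀ᶠ x in 𝓝 x₀, ∀ v, fderiv ℝ α x (W x) v + α x (W v) = wt * α x v) := by
  have hc' : ContDiff ℝ ∞ (fderiv ℝ c) := hc.fderiv_right (by simp)
  set ψ : ℝ × E → E := fun z => z.1 • z.2 + (1 - z.1) • c z.2 with hψ
  set Ψ : ℝ × E → E →L[ℝ] E := fun z =>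
    z.1 • ContinuousLinearMap.id ℝ E + (1 - z.1) • fderiv ℝ c z.2 with hΨ
  have hψs : ContDiff ℝ ∞ ψ := by rw [hψ]; fun_prop
  have hΨs : ContDiff ℝ ∞ Ψ := by rw [hΨ]; fun_prop
  set A : ℝ × E → E →L[ℝ] ℝ := fun z => (σ (ψ z) (z.2 - c z.2)).comp (Ψ z) with hA
  have hAs : ContDiff ℝ ∞ A := by
    rw [hA]
    exact ((hσ.comp hψs).clm_apply (by fun_prop)).clm_comp hΨs
  -- derivatives
  have dσ : ∀ x, HasFDerivAt σ (fderiv ℝ σ x) x :=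
    fun x => (hσ.differentiable (by simp) x).hasFDerivAt
  have dc : ∀ x, HasFDerivAt c (fderiv ℝ c x) x :=
    fun x => (hc.differentiable (by simp) x).hasFDerivAt
  have dc' : ∀ x, HasFDerivAt (fderiv ℝ c) (fderiv ℝ (fderiv ℝ c) x) x :=
    fun x => (hc'.differentiable (by simp) x).hasFDerivAt
  have dψ : ∀ s x, HasFDerivAt (fun y => ψ (s, y)) (Ψ (s, x)) x := by
    intro s x
    exact ((hasFDerivAt_id x).const_smul s).add ((dc x).const_smul (1 - s))
  have dΨ : ∀ s x v, HasFDerivAt (fun y => Ψ (s, y) v)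
      ((1 - s) • (fderiv ℝ (fderiv ℝ c) x).flip v) x := by
    intro s x v
    have h1 := ((dc' x).clm_apply (hasFDerivAt_const v x)).const_smul (1 - s)
    have h2 := h1.const_add (s • v)
    refine h2.congr_fderiv ?_
    ext u
    simp
  have dA : ∀ s x u v, D2 A (s, x) u v =
      fderiv ℝ σ (ψ (s, x)) (Ψ (s, x) u) (x - c x) (Ψ (s, x) v)
      + σ (ψ (s, x)) (u - fderiv ℝ c x u) (Ψ (s, x) v)
      + σ (ψ (s, x)) (x - c x) ((1 - s) • fderiv ℝ (fderiv ℝ c) x u v) := by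
    intro s x u v
    obtain ⟨T₁, h1, g1⟩ := duo_fderiv (hasFDerivAt_D2 hAs s x) (hasFDerivAt_const v x)
    have h4 : HasFDerivAt (fun y => y - c y) (ContinuousLinearMap.id ℝ E - fderiv ℝ c x) x :=
      (hasFDerivAt_id x).sub (dc x)
    have h5 : HasFDerivAt (fun y => σ (ψ (s, y))) ((fderiv ℝ σ (ψ (s, x))).comp (Ψ (s, x))) x :=
      comp_f (F := E →L[ℝ] E →L[ℝ] ℝ) (S := σ) (g := fun y => ψ (s, y)) (dσ (ψ (s, x))) (dψ s x)
    obtain ⟨T₂, h2, g2⟩ := tri_fderiv h5 h4 (dΨ s x v)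
    have h3 := congrArg (fun T => T u) (h1.unique h2)
    simp only [g1, g2] at h3
    simpa using h3
  obtain ⟨hαs, hα'⟩ := paramInt hAs
  set α : E → E →L[ℝ] ℝ := fun x => ∫ s in (0:ℝ)..1, A (s, x) with hα
  have hD2c : Continuous (D2 A) := (D2_contDiff hAs).continuous
  have hαuv : ∀ x u v, fderiv ℝ α x u v = ∫ s in (0:ℝ)..1, D2 A (s, x) u v := by
    intro x u v
    rw [hα' x u]
    exact (ContinuousLinearMap.intervalIntegral_apply
      ((by fun_prop : Continuous fun s => D2 A (s, x) u).intervalIntegrable _ _) v)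
  have hαv : ∀ x v, α x v = ∫ s in (0:ℝ)..1, A (s, x) v := by
    intro x v
    have := hAs.continuous
    exact (ContinuousLinearMap.intervalIntegral_apply
      ((by fun_prop : Continuous fun s => A (s, x)).intervalIntegrable _ _) v)
  -- neighbourhood
  obtain ⟨ε, hε, hball⟩ := Metric.eventually_nhds_iff_ball.1 (halt.and (hcl.and hhom))
  have hψmem : ∀ᶠ x in 𝓝 x₀, ∀ s ∈ Icc (0:ℝ) 1, ψ (s, x) ∈ Metric.ball x₀ ε := by
    have h1 : ∀ᶠ x in 𝓝 x₀, c x ∈ Metric.ball x₀ ε := by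
      have := hc.continuous.continuousAt (x := x₀)
      rw [ContinuousAt, hc0] at this
      exact this (Metric.ball_mem_nhds _ hε)
    filter_upwards [h1, Metric.ball_mem_nhds x₀ hε] with x hx1 hx2 s hs
    exact (convex_ball x₀ ε) hx2 hx1 hs.1 (by linarith [hs.2]) (by ring)
  have hψ0 : ∀ s, ψ (s, x₀) = x₀ := by
    intro s
    simp only [hψ, hc0, ← add_smul]
    simp
  refine ⟨α, hαs, ?_, ?_, ?_, ?_⟩
  · simp [hα, hA, hc0]
  · ext u v
    rw [hαuv]
    simp [dA, hψ0, h0, hc0]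
  · filter_upwards [hψmem, hcc] with x hx hxc u v
    rw [hαuv, hαuv, ← intervalIntegral.integral_sub
      ((by fun_prop : Continuous fun s => D2 A (s, x) u v).intervalIntegrable _ _)
      ((by fun_prop : Continuous fun s => D2 A (s, x) v u).intervalIntegrable _ _)]
    have hsym : fderiv ℝ (fderiv ℝ c) x u v = fderiv ℝ (fderiv ℝ c) x v u :=
      symm2 hc _ _ _
    have hd : ∀ s ∈ uIcc (0:ℝ) 1, HasDerivAt (fun s => σ (ψ (s, x)) (Ψ (s, x) u) (Ψ (s, x) v))
        (D2 A (s, x) u v - D2 A (s, x) v u) s := by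
      intro s hs
      rw [uIcc_of_le zero_le_one] at hs
      have e1 : HasDerivAt (fun s => ψ (s, x)) (x - c x) s := by
        have h1 : HasDerivAt (fun s : ℝ => s • x) ((1:ℝ) • x) s := (hasDerivAt_id s).smul_const x
        have h2 : HasDerivAt (fun s : ℝ => (1 - s) • c x) ((-1:ℝ) • c x) s :=
          ((hasDerivAt_id s).const_sub 1).smul_const (c x)
        refine (h1.add h2).congr_deriv (by module)
      have e2 : ∀ u, HasDerivAt (fun s => Ψ (s, x) u) (u - fderiv ℝ c x u) s := by
        intro u
        have h1 : HasDerivAt (fun s : ℝ => s • u) ((1:ℝ) • u) s := (hasDerivAt_id s).smul_const u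
        have h2 : HasDerivAt (fun s : ℝ => (1 - s) • fderiv ℝ c x u) ((-1:ℝ) • fderiv ℝ c x u) s :=
          ((hasDerivAt_id s).const_sub 1).smul_const _
        refine (h1.add h2).congr_deriv (by module)
      have e4 : HasDerivWithinAt (fun s => σ (ψ (s, x))) (fderiv ℝ σ (ψ (s, x)) (x - c x)) univ s :=
        (comp_d (F := E →L[ℝ] E →L[ℝ] ℝ) (S := σ) (g := fun s => ψ (s, x)) (dσ (ψ (s, x))) e1.hasDerivWithinAt)
      have e3 := tri_deriv e4 (e2 u).hasDerivWithinAt (e2 v).hasDerivWithinAt (s := univ)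
      rw [hasDerivWithinAt_univ] at e3
      refine e3.congr_deriv ?_
      have hb := hball _ (hx s hs)
      have hdalt : ∀ a b d, fderiv ℝ σ (ψ (s, x)) a b d = - fderiv ℝ σ (ψ (s, x)) a d b := by
        intro a b d
        obtain ⟨T₁, f1, i1⟩ := tri_fderiv (dσ (ψ (s, x))) (hasFDerivAt_const b _) (hasFDerivAt_const d _)
        obtain ⟨T₂, f2, i2⟩ := tri_fderiv (dσ (ψ (s, x))) (hasFDerivAt_const d _) (hasFDerivAt_const b _)
        have f3 : (fun y => σ y b d) =ᶠ[𝓝 (ψ (s, x))] (fun y => - σ y d b) := by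
          filter_upwards [Metric.isOpen_ball.mem_nhds (hx s hs)] with y hy
          exact (hball y hy).1 b d
        have f4 := congrArg (fun T => T a) (f1.unique (f2.neg.congr_of_eventuallyEq f3))
        simpa [i1, i2] using f4
      have g1 := hb.2.1 (x - c x) (Ψ (s, x) u) (Ψ (s, x) v)
      have g2 := hdalt (Ψ (s, x) u) (Ψ (s, x) v) (x - c x)
      have g3 := hb.1 (Ψ (s, x) u) (v - fderiv ℝ c x v)
      rw [dA, dA, hsym]
      linarith
    rw [intervalIntegral.integral_eq_sub_of_hasDerivAt hd
      ((by fun_prop : Continuous fun s => D2 A (s, x) u v - D2 A (s, x) v u).intervalIntegrable _ _)]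
    simp [hψ, hΨ, hxc]
  · filter_upwards [hψmem, hcW.eventually_nhds] with x hx hxW v
    have hAc := hAs.continuous
    rw [hαuv, hαv, hαv, ← intervalIntegral.integral_const_mul, ← intervalIntegral.integral_add
      ((by fun_prop : Continuous fun s => D2 A (s, x) (W x) v).intervalIntegrable _ _)
      ((by fun_prop : Continuous fun s => A (s, x) (W v)).intervalIntegrable _ _)]
    refine intervalIntegral.integral_congr fun s hs => ?_
    rw [uIcc_of_le zero_le_one] at hs
    have hb := (hball _ (hx s hs)).2.2 (x - c x) (Ψ (s, x) v)
    have hsym : fderiv ℝ (fderiv ℝ c) x (W x) v = fderiv ℝ (fderiv ℝ c) x v (W x) :=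
      symm2 hc _ _ _
    have k1 : fderiv ℝ (fderiv ℝ c) x v (W x) + fderiv ℝ c x (W v) = W (fderiv ℝ c x v) := by
      obtain ⟨T, f1, i1⟩ := duo_fderiv (dc' x) (W.hasFDerivAt (x := x))
      have f2 : HasFDerivAt (fun y => W (c y)) (W.comp (fderiv ℝ c x)) x :=
        W.hasFDerivAt.comp x (dc x)
      have f4 := congrArg (fun T => T v) (f1.unique (f2.congr_of_eventuallyEq hxW))
      simpa [i1] using f4
    have k2 : Ψ (s, x) (W x) = W (ψ (s, x)) := by
      simp [hψ, hΨ, hxW.self_of_nhds]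
    have k3 : W x - fderiv ℝ c x (W x) = W (x - c x) := by
      rw [map_sub, hxW.self_of_nhds]
    have k4 : (1 - s) • fderiv ℝ (fderiv ℝ c) x (W x) v + Ψ (s, x) (W v) = W (Ψ (s, x) v) := by
      simp only [hΨ, ContinuousLinearMap.add_apply, ContinuousLinearMap.smul_apply,
        ContinuousLinearMap.id_apply, map_add, map_smul, ← k1, hsym]
      module
    simp only [dA]
    have k5 : A (s, x) (W v) = σ (ψ (s, x)) (x - c x) (Ψ (s, x) (W v)) := rfl
    have k6 : A (s, x) v = σ (ψ (s, x)) (x - c x) (Ψ (s, x) v) := rfl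
    have k7 := congrArg (σ (ψ (s, x)) (x - c x)) k4
    rw [map_add] at k7
    rw [k5, k6, ← hb, k2, k3]
    linarith

end prim
end HD

namespace HD
section moser
variable {E : Type} [NormedAddCommGroup E] [NormedSpace ℝ E] [FiniteDimensional ℝ E]

lemma smooth_aff {F : Type} [NormedAddCommGroup F] [NormedSpace ℝ F] {a b : E → F}
    (ha : ContDiff ℝ ∞ a) (hb : ContDiff ℝ ∞ b) :
    ContDiff ℝ ∞ (fun z : ℝ × E => a z.2 + z.1 • b z.2) :=
  (ha.comp contDiff_snd).add (contDiff_fst.smul (hb.comp contDiff_snd))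

lemma deriv_aff {F : Type} [NormedAddCommGroup F] [NormedSpace ℝ F] {a b : ℝ → F} {a' b' : F}
    {S : Set ℝ} {s : ℝ} (ha : HasDerivWithinAt a a' S s) (hb : HasDerivWithinAt b b' S s) :
    HasDerivWithinAt (fun s => a s + s • b s) (a' + (s • b' + (1:ℝ) • b s)) S s :=
  ha.add ((hasDerivWithinAt_id s _).smul hb)

lemma alt_fderiv {σ : E → E →L[ℝ] E →L[ℝ] ℝ} (hσ : ContDiff ℝ ∞ σ) {x : E}
    (h : ∀ᶠ y in 𝓝 x, ∀ u v, σ y u v = - σ y v u) (a b d : E) :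
    fderiv ℝ σ x a b d = - fderiv ℝ σ x a d b := by
  have dσ : HasFDerivAt σ (fderiv ℝ σ x) x := (hσ.differentiable (by simp) x).hasFDerivAt
  obtain ⟨T₁, f1, i1⟩ := tri_fderiv dσ (hasFDerivAt_const b _) (hasFDerivAt_const d _)
  obtain ⟨T₂, f2, i2⟩ := tri_fderiv dσ (hasFDerivAt_const d _) (hasFDerivAt_const b _)
  have f3 : (fun y => σ y b d) =ᶠ[𝓝 x] (fun y => - σ y d b) := by
    filter_upwards [h] with y hy
    exact hy b d
  have f4 := congrArg (fun T => T a) (f1.unique (f2.neg.congr_of_eventuallyEq f3))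
  simpa [i1, i2] using f4

lemma invertible_of_nd (B : E →L[ℝ] E →L[ℝ] ℝ) (h : ∀ v, (∀ u, B v u = 0) → v = 0) :
    B.IsInvertible := by
  have hinj : Function.Injective (B : E →ₗ[ℝ] (E →L[ℝ] ℝ)) := by
    rw [injective_iff_map_eq_zero]
    intro v hv
    exact h v fun u => by
      have : B v = 0 := hv
      rw [this]; rfl
  have hfr : Module.finrank ℝ E = Module.finrank ℝ (E →L[ℝ] ℝ) := by
    rw [← (LinearMap.toContinuousLinearMap (𝕜 := ℝ) (E := E) (F' := ℝ)).finrank_eq]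
    exact (Subspace.dual_finrank_eq (K := ℝ) (V := E)).symm
  refine ⟨(LinearEquiv.ofInjectiveOfFinrankEq (B : E →ₗ[ℝ] (E →L[ℝ] ℝ)) hinj hfr).toContinuousLinearEquiv, ?_⟩
  ext u v
  rfl

/-- the interpolating family -/
noncomputable def MM (Ω σ : E → E →L[ℝ] E →L[ℝ] ℝ) (s : ℝ) (x : E) : E →L[ℝ] E →L[ℝ] ℝ :=
  Ω x + s • σ x

lemma dMM {Ω σ : E → E →L[ℝ] E →L[ℝ] ℝ} (hΩ : ContDiff ℝ ∞ Ω) (hσ : ContDiff ℝ ∞ σ) (s : ℝ) (x : E) :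
    HasFDerivAt (fun y => MM Ω σ s y) (fderiv ℝ Ω x + s • fderiv ℝ σ x) x :=
  (hΩ.differentiable (by simp) x).hasFDerivAt.add
    ((hσ.differentiable (by simp) x).hasFDerivAt.const_smul s)

lemma diffid {Ω σ : E → E →L[ℝ] E →L[ℝ] ℝ} {α : E → E →L[ℝ] ℝ} {f : ℝ × E → E}
    (hΩ : ContDiff ℝ ∞ Ω) (hσ : ContDiff ℝ ∞ σ) (hα : ContDiff ℝ ∞ α) (hf : ContDiff ℝ ∞ f)
    {s : ℝ} {x : E} (h : ∀ᶠ y in 𝓝 x, ∀ v, MM Ω σ s y (f (s, y)) v = - α y v) (u v : E) :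
    fderiv ℝ Ω x u (f (s, x)) v + s * fderiv ℝ σ x u (f (s, x)) v
      + MM Ω σ s x (D2 f (s, x) u) v = - fderiv ℝ α x u v := by
  obtain ⟨T₁, f1, i1⟩ := tri_fderiv (dMM hΩ hσ s x) (hasFDerivAt_D2 hf s x) (hasFDerivAt_const v _)
  obtain ⟨T₂, f2, i2⟩ := duo_fderiv (hα.differentiable (by simp) x).hasFDerivAt (hasFDerivAt_const v _)
  have f3 : (fun y => MM Ω σ s y (f (s, y)) v) =ᶠ[𝓝 x] (fun y => - α y v) := by
    filter_upwards [h] with y hy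
    exact hy v
  have f4 := congrArg (fun T => T u) (f1.unique (f2.neg.congr_of_eventuallyEq f3))
  simpa [i1, i2] using f4

lemma moserField {Ω σ : E → E →L[ℝ] E →L[ℝ] ℝ} {α : E → E →L[ℝ] ℝ} {x₀ : E}
    (hΩ : ContDiff ℝ ∞ Ω) (hσ : ContDiff ℝ ∞ σ) (hα : ContDiff ℝ ∞ α) 
    (h0 : σ x₀ = 0) (hnd : ∀ v, (∀ u, Ω x₀ v u = 0) → v = 0) (hα0 : α x₀ = 0)
    (hα1 : fderiv ℝ α x₀ = 0) :
    ∃ f : ℝ × E → E, ContDiff ℝ ∞ f ∧ (∀ s ∈ Icc (0:ℝ) 1, f (s, x₀) = 0) ∧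
      (∀ s ∈ Icc (0:ℝ) 1, D2 f (s, x₀) = 0) ∧
      (∀ᶠ x in 𝓝 x₀, ∀ s ∈ Icc (0:ℝ) 1, (∀ v, MM Ω σ s x (f (s, x)) v = - α x v) ∧
        ∀ v, (∀ u, MM Ω σ s x v u = 0) → v = 0) := by
  set M : ℝ × E → E →L[ℝ] E →L[ℝ] ℝ := fun z => MM Ω σ z.1 z.2 with hM
  have hMs : ContDiff ℝ ∞ M := by
    exact smooth_aff hΩ hσ
  set G : Set (ℝ × E) := {z | (M z).IsInvertible} with hG
  have hGo : IsOpen G := (ContinuousLinearEquiv.isOpen (𝕜 := ℝ) (E := E) (F := E →L[ℝ] ℝ)).preimage hMs.continuous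
  set K : Set (ℝ × E) := Icc (0:ℝ) 1 ×ˢ {x₀} with hK
  have hKc : IsCompact K := isCompact_Icc.prod isCompact_singleton
  have hKG : K ⊆ G := by
    rintro ⟨s, x⟩ ⟨hs, hx⟩
    simp only [mem_singleton_iff] at hx
    subst hx
    apply invertible_of_nd
    intro v hv
    apply hnd
    intro u
    have := hv u
    simpa [hM, MM, h0] using this
  have hfs : ContDiffOn ℝ ∞ (fun z : ℝ × E => - (M z).inverse (α z.2)) G := by
    intro z hz
    have h1 : ContDiffAt ℝ ∞ (fun z => (M z).inverse) z :=
      ((ContinuousLinearMap.IsInvertible.contDiffAt_map_inverse hz)).comp z hMs.contDiffAt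
    have h2 : ContDiffAt ℝ ∞ (fun z : ℝ × E => α z.2) z := (by fun_prop : ContDiff ℝ ∞ fun z : ℝ × E => α z.2).contDiffAt
    exact (h1.clm_apply h2).neg.contDiffWithinAt
  obtain ⟨f, hf, hfe⟩ := extend hGo hfs hKc.isClosed hKG
  have hev : ∀ᶠ z in 𝓝ˢ K, (∀ v, M z (f z) v = - α z.2 v) ∧ ∀ v, (∀ u, M z v u = 0) → v = 0 := by
    filter_upwards [hfe, hGo.mem_nhdsSet.2 hKG] with z hz hzG
    obtain ⟨e, he⟩ := hzG
    constructor
    · intro v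
      rw [hz, ← he, ContinuousLinearMap.inverse_equiv]
      simp
    · intro v hv
      have : M z v = 0 := by ext u; exact hv u
      rw [← he] at this
      simpa using this
  rw [hK, isCompact_Icc.nhdsSet_prod_eq isCompact_singleton, nhdsSet_singleton,
    eventually_prod_iff] at hev
  obtain ⟨pa, hpa, pb, hpb, hpp⟩ := hev
  have key : ∀ᶠ x in 𝓝 x₀, ∀ s ∈ Icc (0:ℝ) 1, (∀ v, MM Ω σ s x (f (s, x)) v = - α x v) ∧
        ∀ v, (∀ u, MM Ω σ s x v u = 0) → v = 0 := by
    filter_upwards [hpb] with x hx s hs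
    exact hpp (hpa.self_of_nhdsSet s hs) hx
  have k0 : ∀ s ∈ Icc (0:ℝ) 1, f (s, x₀) = 0 := by
    intro s hs
    have := key.self_of_nhds s hs
    apply this.2
    intro u
    rw [this.1, hα0]; simp
  refine ⟨f, hf, k0, ?_, key⟩
  intro s hs
  ext u
  apply (key.self_of_nhds s hs).2
  intro v
  have := diffid hΩ hσ hα hf (s := s) (x := x₀) (key.mono fun x hx => (hx s hs).1) u v
  rw [k0 s hs, hα1] at this
  simpa using this

end moser
end HD

namespace HD
section moser
variable {E : Type} [NormedAddCommGroup E] [NormedSpace ℝ E] [FiniteDimensional ℝ E]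

lemma pext_sol (a : E) (γ η : C(Icc (0:ℝ) 1, E)) (h : γ = cst a + J η) :
    pext γ 0 = a ∧ ∀ s ∈ Icc (0:ℝ) 1, HasDerivWithinAt (pext γ) (pext η s) (Icc 0 1) s := by
  have h1 : pext γ = fun s => a + pext (J η) s := by
    rw [h]; rfl
  constructor
  · have : (0:ℝ) ∈ Icc (0:ℝ) 1 := by simp
    rw [h1]
    simp only [pext_of_mem _ this, J_apply]
    simp
  · intro s hs
    rw [h1]
    exact (hasDerivAt_pext_J η hs).const_add a

lemma icc_ici {F : Type} [NormedAddCommGroup F] [NormedSpace ℝ F] {g : ℝ → F} {g' : F} {s : ℝ}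
    (hs : s ∈ Ico (0:ℝ) 1)
    (h : HasDerivWithinAt g g' (Icc 0 1) s) : HasDerivWithinAt g g' (Ici s) s := by
  apply h.mono_of_mem_nhdsWithin
  filter_upwards [self_mem_nhdsWithin, mem_nhdsWithin_of_mem_nhds (Iio_mem_nhds hs.2)] with y hy hy2
  exact ⟨hs.1.trans hy, le_of_lt hy2⟩

set_option maxHeartbeats 1000000 in
theorem moser (W : E →L[ℝ] E) (wt : ℝ) (x₀ : E) (Ω σ : E → E →L[ℝ] E →L[ℝ] ℝ)
    (α : E → E →L[ℝ] ℝ) (P : E → Prop) (hP : ∀ᶠ x in 𝓝 x₀, P x)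
    (hΩ : ContDiff ℝ ∞ Ω) (hσ : ContDiff ℝ ∞ σ) (hα : ContDiff ℝ ∞ α)
    (h0 : σ x₀ = 0) (hnd : ∀ v, (∀ u, Ω x₀ v u = 0) → v = 0) (hα0 : α x₀ = 0)
    (hα1 : fderiv ℝ α x₀ = 0)
    (haltΩ : ∀ᶠ x in 𝓝 x₀, ∀ u v, Ω x u v = - Ω x v u)
    (haltσ : ∀ᶠ x in 𝓝 x₀, ∀ u v, σ x u v = - σ x v u)
    (hclΩ : ∀ᶠ x in 𝓝 x₀, ∀ u v z,
      fderiv ℝ Ω x u v z + fderiv ℝ Ω x v z u + fderiv ℝ Ω x z u v = 0)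
    (hclσ : ∀ᶠ x in 𝓝 x₀, ∀ u v z,
      fderiv ℝ σ x u v z + fderiv ℝ σ x v z u + fderiv ℝ σ x z u v = 0)
    (hhomΩ : ∀ᶠ x in 𝓝 x₀, ∀ u v,
      fderiv ℝ Ω x (W x) u v + Ω x (W u) v + Ω x u (W v) = wt * Ω x u v)
    (hhomσ : ∀ᶠ x in 𝓝 x₀, ∀ u v,
      fderiv ℝ σ x (W x) u v + σ x (W u) v + σ x u (W v) = wt * σ x u v)
    (hdα : ∀ᶠ x in 𝓝 x₀, ∀ u v, fderiv ℝ α x u v - fderiv ℝ α x v u = σ x u v)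
    (hhomα : ∀ᶠ x in 𝓝 x₀, ∀ v, fderiv ℝ α x (W x) v + α x (W v) = wt * α x v) :
    ∃ (V : Set E) (φ : E → E), IsOpen V ∧ x₀ ∈ V ∧ ContDiffOn ℝ ∞ φ V ∧
      (∀ x ∈ V, P x ∧ P (φ x) ∧ fderiv ℝ φ x (W x) = W (φ x) ∧
        ∀ u v, (Ω (φ x) + σ (φ x)) (fderiv ℝ φ x u) (fderiv ℝ φ x v) = Ω x u v) := by
  obtain ⟨f, hf, hf0, hf1, hfe⟩ := moserField hΩ hσ hα h0 hnd hα0 hα1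
  obtain ⟨V₀, hV₀, hx₀, Φ, hΦs, hΦ0, hΦ⟩ := flow hf x₀ hf0 hf1
  obtain ⟨ε, hε, hball⟩ := Metric.eventually_nhds_iff_ball.1 (hP.and (haltΩ.and (haltσ.and
    (hclΩ.and (hclσ.and (hhomΩ.and (hhomσ.and (hdα.and (hhomα.and hfe)))))))))
  have hB : ∀ y ∈ Metric.ball x₀ ε, ∀ᶠ z in 𝓝 y, z ∈ Metric.ball x₀ ε :=
    fun y hy => Metric.isOpen_ball.mem_nhds hy
  -- pointwise facts
  have F1 : ∀ y ∈ Metric.ball x₀ ε, ∀ s ∈ Icc (0:ℝ) 1, ∀ a b, σ y a b +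
      (fderiv ℝ Ω y (f (s, y)) a b + s * fderiv ℝ σ y (f (s, y)) a b)
      + MM Ω σ s y (D2 f (s, y) a) b + MM Ω σ s y a (D2 f (s, y) b) = 0 := by
    intro y hy s hs a b
    obtain ⟨-, b1, b2, b3, b4, b5, b6, b7, b8, b9⟩ := hball y hy
    have hid : ∀ᶠ z in 𝓝 y, ∀ v, MM Ω σ s z (f (s, z)) v = - α z v := by
      filter_upwards [hB y hy] with z hz
      exact ((hball z hz).2.2.2.2.2.2.2.2.2 s hs).1
    have a1 := alt_fderiv hΩ ((hB y hy).mono fun z hz => (hball z hz).2.1) a b (f (s, y))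
    have a2 := alt_fderiv hσ ((hB y hy).mono fun z hz => (hball z hz).2.2.1) a b (f (s, y))
    have d1 := diffid hΩ hσ hα hf hid a b
    have d2 := diffid hΩ hσ hα hf hid b a
    have d3 : MM Ω σ s y a (D2 f (s, y) b) = - MM Ω σ s y (D2 f (s, y) b) a := by
      simp only [MM, ContinuousLinearMap.add_apply, ContinuousLinearMap.smul_apply, smul_eq_mul]
      rw [b1 a, b2 a]; ring
    have d4 := b3 (f (s, y)) a b
    have d5 := b4 (f (s, y)) a b
    have d6 := b7 a b
    rw [d3]
    linear_combination d1 - d2 + d4 + s * d5 - d6 - a1 - s * a2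
  have F2 : ∀ y ∈ Metric.ball x₀ ε, ∀ s ∈ Icc (0:ℝ) 1, D2 f (s, y) (W y) = W (f (s, y)) := by
    intro y hy s hs
    obtain ⟨-, b1, b2, b3, b4, b5, b6, b7, b8, b9⟩ := hball y hy
    have hid : ∀ᶠ z in 𝓝 y, ∀ v, MM Ω σ s z (f (s, z)) v = - α z v := by
      filter_upwards [hB y hy] with z hz
      exact ((hball z hz).2.2.2.2.2.2.2.2.2 s hs).1
    rw [← sub_eq_zero]
    apply (b9 s hs).2
    intro v
    have d1 := diffid hΩ hσ hα hf hid (W y) v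
    have d2 := b5 (f (s, y)) v
    have d3 := b6 (f (s, y)) v
    have d4 := b8 v
    have d5 := (b9 s hs).1 v
    have d6 := (b9 s hs).1 (W v)
    rw [map_sub, ContinuousLinearMap.sub_apply]
    simp only [MM, ContinuousLinearMap.add_apply, ContinuousLinearMap.smul_apply, smul_eq_mul] at d1 d5 d6 ⊢
    linear_combination d1 - d2 - s * d3 - d4 + d6 - wt * d5
  set V : Set E := V₀ ∩ Φ ⁻¹' (Metric.ball (cst x₀) ε) with hV
  have hVo : IsOpen V := hΦs.continuousOn.isOpen_inter_preimage hV₀ Metric.isOpen_ball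
  have hγmem : ∀ x ∈ V, ∀ s, pext (Φ x) s ∈ Metric.ball x₀ ε := by
    intro x hx s
    exact lt_of_le_of_lt (ContinuousMap.dist_apply_le_dist (f := Φ x) (g := cst x₀) (projIcc 0 1 zero_le_one s)) hx.2
  have h1I : (1:ℝ) ∈ Icc (0:ℝ) 1 := by simp
  have h0I : (0:ℝ) ∈ Icc (0:ℝ) 1 := by simp
  have hsol : ∀ x ∈ V, pext (Φ x) 0 = x ∧ ∀ s ∈ Icc (0:ℝ) 1,
      HasDerivWithinAt (pext (Φ x)) (f (s, pext (Φ x) s)) (Icc 0 1) s := by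
    intro x hx
    obtain ⟨g1, g2⟩ := pext_sol _ _ _ (hΦ x hx.1).1
    refine ⟨g1, fun s hs => ?_⟩
    have := g2 s hs
    rwa [pext_of_mem _ hs, nem_apply, ← pext_of_mem _ hs] at this
  have hsol' : ∀ x ∈ V, ∀ u, pext (fderiv ℝ Φ x u) 0 = u ∧ ∀ s ∈ Icc (0:ℝ) 1,
      HasDerivWithinAt (pext (fderiv ℝ Φ x u))
        (D2 f (s, pext (Φ x) s) (pext (fderiv ℝ Φ x u) s)) (Icc 0 1) s := by
    intro x hx u
    obtain ⟨g1, g2⟩ := pext_sol _ _ _ ((hΦ x hx.1).2 u)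
    refine ⟨g1, fun s hs => ?_⟩
    have := g2 s hs
    rwa [pext_of_mem _ hs, Bop_apply, nem_apply, ← pext_of_mem _ hs, ← pext_of_mem _ hs] at this
  have hev : ∀ x ∈ V, HasFDerivAt (fun x => evl ⟨1, h1I⟩ (Φ x)) ((evl ⟨1, h1I⟩).comp (fderiv ℝ Φ x)) x := by
    intro x hx
    have hd : HasFDerivAt Φ (fderiv ℝ Φ x) x :=
      ((hΦs.contDiffAt (hV₀.mem_nhds hx.1)).differentiableAt (by simp)).hasFDerivAt
    exact comp_f (hasFDerivAt_evl _ _) hd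
  refine ⟨V, fun x => evl ⟨1, h1I⟩ (Φ x), hVo, ⟨hx₀, ?_⟩, ?_, ?_⟩
  · simp [hΦ0, hε]
  · exact (contDiff_evl _).comp_contDiffOn (hΦs.mono inter_subset_left)
  intro x hx
  have e1 : evl ⟨1, h1I⟩ (Φ x) = pext (Φ x) 1 := by rw [pext_of_mem _ h1I]; rfl
  have e2 : ∀ u, fderiv ℝ (fun x => evl ⟨1, h1I⟩ (Φ x)) x u = pext (fderiv ℝ Φ x u) 1 := by
    intro u
    rw [(hev x hx).fderiv, pext_of_mem _ h1I]; rfl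
  simp only [e1, e2]
  obtain ⟨s1, s2⟩ := hsol x hx
  refine ⟨?_, (hball _ (hγmem x hx 1)).1, ?_, ?_⟩
  · have := (hball _ (hγmem x hx 0)).1
    rwa [s1] at this
  · obtain ⟨t1, t2⟩ := hsol' x hx (W x)
    have hcont : Continuous fun s => D2 f (s, pext (Φ x) s) :=
      (D2_contDiff hf).continuous.comp (continuous_id.prodMk (continuous_pext _))
    obtain ⟨K, hK⟩ := isCompact_Icc.exists_bound_of_continuousOn (hcont.continuousOn (s := Icc (0:ℝ) 1))
    have hz : ∀ s ∈ Icc (0:ℝ) 1, pext (fderiv ℝ Φ x (W x)) s - W (pext (Φ x) s) = 0 := by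
      refine eq_zero_of_abs_deriv_le_mul_abs_self_of_eq_zero_right (K := K)
        (f' := fun s => D2 f (s, pext (Φ x) s) (pext (fderiv ℝ Φ x (W x)) s - W (pext (Φ x) s)))
        ?_ ?_ ?_ ?_
      · exact ((continuous_pext _).sub (W.continuous.comp (continuous_pext _))).continuousOn
      · intro s hs
        have hs' := Ico_subset_Icc_self hs
        apply icc_ici hs
        have := (t2 s hs').sub (comp_d W.hasFDerivAt (s2 s hs'))
        refine this.congr_deriv ?_
        rw [map_sub, F2 _ (hγmem x hx s) s hs']
      · rw [t1, s1, sub_self]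
      · intro s hs
        exact (ContinuousLinearMap.le_opNorm _ _).trans
          (mul_le_mul_of_nonneg_right (hK s (Ico_subset_Icc_self hs)) (norm_nonneg _))
    exact sub_eq_zero.1 (hz 1 h1I)
  · intro u v
    obtain ⟨t1, t2⟩ := hsol' x hx u
    obtain ⟨r1, r2⟩ := hsol' x hx v
    have hM : ∀ s ∈ Icc (0:ℝ) 1, HasDerivWithinAt (fun s => MM Ω σ s (pext (Φ x) s))
        (fderiv ℝ Ω (pext (Φ x) s) (f (s, pext (Φ x) s)) + (s • (fderiv ℝ σ (pext (Φ x) s) (f (s, pext (Φ x) s))) + (1:ℝ) • σ (pext (Φ x) s))) (Icc 0 1) s := by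
      intro s hs
      have q1 := comp_d (hΩ.differentiable (by simp) (pext (Φ x) s)).hasFDerivAt (s2 s hs)
      have q2 := comp_d (hσ.differentiable (by simp) (pext (Φ x) s)).hasFDerivAt (s2 s hs)
      exact deriv_aff q1 q2
    have hd : ∀ s ∈ Icc (0:ℝ) 1, HasDerivWithinAt (fun s => MM Ω σ s (pext (Φ x) s)
        (pext (fderiv ℝ Φ x u) s) (pext (fderiv ℝ Φ x v) s)) 0 (Icc 0 1) s := by
      intro s hs
      refine (tri_deriv (hM s hs) (t2 s hs) (r2 s hs)).congr_deriv ?_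
      have := F1 _ (hγmem x hx s) s hs (pext (fderiv ℝ Φ x u) s) (pext (fderiv ℝ Φ x v) s)
      simp only [ContinuousLinearMap.add_apply, ContinuousLinearMap.smul_apply, smul_eq_mul]
      linarith
    have hc := constant_of_has_deriv_right_zero (fun s hs => (hd s hs).continuousWithinAt)
      (fun s hs => icc_ici hs (hd s (Ico_subset_Icc_self hs))) 1 h1I
    simp only [t1, r1, s1] at hc
    simpa [MM] using hc

end moser
end HD

namespace HD
section form
variable {E : Type} [NormedAddCommGroup E] [NormedSpace ℝ E] {r : ℕ}

/-- the two-form `Σ dp ∧ dq` -/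
noncomputable def frm (q p : Fin r → E → ℝ) (x : E) : E →L[ℝ] E →L[ℝ] ℝ :=
  ∑ i, ((fderiv ℝ (p i) x).smulRight (fderiv ℝ (q i) x)
    - (fderiv ℝ (q i) x).smulRight (fderiv ℝ (p i) x))

lemma frm_apply (q p : Fin r → E → ℝ) (x u v : E) : frm q p x u v =
    ∑ i, (fderiv ℝ (p i) x u * fderiv ℝ (q i) x v - fderiv ℝ (p i) x v * fderiv ℝ (q i) x u) := by
  simp only [frm, ContinuousLinearMap.sum_apply, ContinuousLinearMap.sub_apply,
    ContinuousLinearMap.smulRight_apply, ContinuousLinearMap.smul_apply, smul_eq_mul]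
  exact Finset.sum_congr rfl fun i _ => by ring

lemma smooth_sr {F : Type} [NormedAddCommGroup F] [NormedSpace ℝ F] {a : E → E →L[ℝ] ℝ} {b : E → F}
    (ha : ContDiff ℝ ∞ a) (hb : ContDiff ℝ ∞ b) :
    ContDiff ℝ ∞ (fun x => (a x).smulRight (b x)) := by
  fun_prop

lemma smooth_frm {q p : Fin r → E → ℝ} (hq : ∀ i, ContDiff ℝ ∞ (q i)) (hp : ∀ i, ContDiff ℝ ∞ (p i)) :
    ContDiff ℝ ∞ (frm q p) := by
  have hq' : ∀ i, ContDiff ℝ ∞ (fderiv ℝ (q i)) := fun i => (hq i).fderiv_right (by simp)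
  have hp' : ∀ i, ContDiff ℝ ∞ (fderiv ℝ (p i)) := fun i => (hp i).fderiv_right (by simp)
  unfold frm
  exact ContDiff.sum fun i _ => (smooth_sr (hp' i) (hq' i)).sub (smooth_sr (hq' i) (hp' i))

lemma frm_fderiv {q p : Fin r → E → ℝ} (hq : ∀ i, ContDiff ℝ ∞ (q i)) (hp : ∀ i, ContDiff ℝ ∞ (p i))
    (x z u v : E) : fderiv ℝ (frm q p) x z u v =
    ∑ i, (fderiv ℝ (fderiv ℝ (p i)) x z u * fderiv ℝ (q i) x v
      + fderiv ℝ (p i) x u * fderiv ℝ (fderiv ℝ (q i)) x z v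
      - fderiv ℝ (fderiv ℝ (p i)) x z v * fderiv ℝ (q i) x u
      - fderiv ℝ (p i) x v * fderiv ℝ (fderiv ℝ (q i)) x z u) := by
  have hq' : ∀ i, ContDiff ℝ ∞ (fderiv ℝ (q i)) := fun i => (hq i).fderiv_right (by simp)
  have hp' : ∀ i, ContDiff ℝ ∞ (fderiv ℝ (p i)) := fun i => (hp i).fderiv_right (by simp)
  have dg : ∀ {g : E → ℝ}, ContDiff ℝ ∞ (fderiv ℝ g) → ∀ u, HasFDerivAt (fun y => fderiv ℝ g y u)
      ((fderiv ℝ (fderiv ℝ g) x).flip u) x := by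
    intro g hg u
    obtain ⟨T, h1, h2⟩ := duo_fderiv (hg.differentiable (by simp) x).hasFDerivAt (hasFDerivAt_const u x)
    refine h1.congr_fderiv ?_
    ext z
    simp [h2]
  obtain ⟨T₁, f1, i1⟩ := tri_fderiv ((smooth_frm hq hp).differentiable (by simp) x).hasFDerivAt
    (hasFDerivAt_const u x) (hasFDerivAt_const v x)
  have f2 : HasFDerivAt (fun y => ∑ i, (fderiv ℝ (p i) y u * fderiv ℝ (q i) y v
      - fderiv ℝ (p i) y v * fderiv ℝ (q i) y u)) _ x :=
    HasFDerivAt.fun_sum fun i _ => ((dg (hp' i) u).mul (dg (hq' i) v)).sub ((dg (hp' i) v).mul (dg (hq' i) u))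
  have f3 := congrArg (fun T => T z) (f1.unique (f2.congr_of_eventuallyEq
    (Eventually.of_forall fun y => frm_apply q p y u v)))
  simp only [i1] at f3
  simp only [map_zero, ContinuousLinearMap.zero_apply, add_zero] at f3
  simp at f3
  rw [f3, ← Finset.sum_sub_distrib]
  exact Finset.sum_congr rfl fun i _ => by ring

lemma frm_closed {q p : Fin r → E → ℝ} (hq : ∀ i, ContDiff ℝ ∞ (q i)) (hp : ∀ i, ContDiff ℝ ∞ (p i))
    (x u v z : E) : fderiv ℝ (frm q p) x u v z + fderiv ℝ (frm q p) x v z u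
      + fderiv ℝ (frm q p) x z u v = 0 := by
  rw [frm_fderiv hq hp, frm_fderiv hq hp, frm_fderiv hq hp, ← Finset.sum_add_distrib,
    ← Finset.sum_add_distrib]
  refine Finset.sum_eq_zero fun i _ => ?_
  rw [symm2 (hp i) x u v, symm2 (hp i) x v z, symm2 (hp i) x z u,
    symm2 (hq i) x u v, symm2 (hq i) x v z, symm2 (hq i) x z u]
  ring

lemma hom_fderiv (W : E →L[ℝ] E) {g : E → ℝ} (hg : ContDiff ℝ ∞ g) {x : E} {ν : ℝ}
    (h : ∀ᶠ y in 𝓝 x, fderiv ℝ g y (W y) = ν * g y) (v : E) :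
    fderiv ℝ (fderiv ℝ g) x (W x) v = ν * fderiv ℝ g x v - fderiv ℝ g x (W v) := by
  have hg' : ContDiff ℝ ∞ (fderiv ℝ g) := hg.fderiv_right (by simp)
  obtain ⟨T, f1, i1⟩ := duo_fderiv (hg'.differentiable (by simp) x).hasFDerivAt (W.hasFDerivAt (x := x))
  have f2 := (hg.differentiable (by simp) x).hasFDerivAt.const_mul ν
  have f4 := congrArg (fun T => T v) (f1.unique (f2.congr_of_eventuallyEq h))
  simp [i1] at f4
  rw [symm2 hg]
  linarith

lemma frm_hom (W : E →L[ℝ] E) (wt : ℝ) {lam mu : Fin r → ℝ} {q p : Fin r → E → ℝ}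
    (hq : ∀ i, ContDiff ℝ ∞ (q i)) (hp : ∀ i, ContDiff ℝ ∞ (p i)) {x : E}
    (hw : ∀ i, mu i + lam i = wt)
    (h1 : ∀ᶠ y in 𝓝 x, ∀ i, fderiv ℝ (q i) y (W y) = lam i * q i y)
    (h2 : ∀ᶠ y in 𝓝 x, ∀ i, fderiv ℝ (p i) y (W y) = mu i * p i y) (u v : E) :
    fderiv ℝ (frm q p) x (W x) u v + frm q p x (W u) v + frm q p x u (W v) = wt * frm q p x u v := by
  rw [frm_fderiv hq hp, frm_apply, frm_apply, frm_apply, ← Finset.sum_add_distrib,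
    ← Finset.sum_add_distrib, Finset.mul_sum]
  refine Finset.sum_congr rfl fun i _ => ?_
  rw [hom_fderiv W (hq i) (h1.mono fun y hy => hy i), hom_fderiv W (hp i) (h2.mono fun y hy => hy i),
    hom_fderiv W (hq i) (h1.mono fun y hy => hy i), hom_fderiv W (hp i) (h2.mono fun y hy => hy i),
    ← hw i]
  ring

end form

section model
variable {m r : ℕ}

lemma timefn (w x₀ : Fin m → ℝ) (k : Fin m) (hk : w k * x₀ k ≠ 0) :
    ∃ t : (Fin m → ℝ) → ℝ, ContDiff ℝ ∞ t ∧ t x₀ = 0 ∧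
      ∀ᶠ x in 𝓝 x₀, fderiv ℝ t x (Wd w x) = 1 := by
  have hw : w k ≠ 0 := left_ne_zero_of_mul hk
  have hx : x₀ k ≠ 0 := right_ne_zero_of_mul hk
  set O : Set (Fin m → ℝ) := {x | x k ≠ 0} with hO
  have hOo : IsOpen O := isOpen_ne_fun (continuous_apply k) continuous_const
  set t₀ : (Fin m → ℝ) → ℝ := fun x => (Real.log (x k) - Real.log (x₀ k)) / w k with ht₀
  have hd : ∀ x ∈ O, HasFDerivAt t₀ ((w k)⁻¹ • ((x k)⁻¹ • (ContinuousLinearMap.proj k : (Fin m → ℝ) →L[ℝ] ℝ))) x := by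
    intro x hx
    have h1 : HasFDerivAt (fun x : Fin m → ℝ => x k) (ContinuousLinearMap.proj k : (Fin m → ℝ) →L[ℝ] ℝ) x :=
      (ContinuousLinearMap.proj k : (Fin m → ℝ) →L[ℝ] ℝ).hasFDerivAt
    have h2 := ((h1.log hx).sub_const (Real.log (x₀ k))).const_mul (w k)⁻¹
    refine h2.congr_of_eventuallyEq (Eventually.of_forall fun y => ?_)
    simp only [ht₀]; ring
  have hs : ContDiffOn ℝ ∞ t₀ O := by
    have h1 : ContDiffOn ℝ ∞ (fun x : Fin m → ℝ => x k) O := (contDiff_apply ℝ ℝ k).contDiffOn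
    exact ((h1.log fun x hx => hx).sub contDiffOn_const).div_const _
  obtain ⟨t, h1, h2⟩ := extend_pt hOo hs (show x₀ ∈ O from hx)
  refine ⟨t, h1, by rw [h2.self_of_nhds]; simp [ht₀], ?_⟩
  filter_upwards [h2.fderiv (𝕜 := ℝ), hOo.mem_nhds (show x₀ ∈ O from hx)] with x e1 e2
  rw [e1, (hd x e2).fderiv, Wd_apply]
  have : x k ≠ 0 := e2
  simp
  field_simp

lemma homfn (w x₀ : Fin m → ℝ) {t : (Fin m → ℝ) → ℝ} (ht : ContDiff ℝ ∞ t) (ht0 : t x₀ = 0)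
    (htW : ∀ᶠ x in 𝓝 x₀, fderiv ℝ t x (Wd w x) = 1) (ν : ℝ) (hν : ν ≠ 0)
    (ξ : (Fin m → ℝ) →L[ℝ] ℝ) : ∃ g : (Fin m → ℝ) → ℝ, ContDiff ℝ ∞ g ∧ fderiv ℝ g x₀ = ξ ∧
      ∀ᶠ x in 𝓝 x₀, fderiv ℝ g x (Wd w x) = ν * g x := by
  set y : (Fin m → ℝ) → (Fin m → ℝ) := fun x j => Real.exp (- t x * w j) * x j with hy
  have hys : ContDiff ℝ ∞ y := by
    rw [contDiff_pi]
    intro j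
    have : ContDiff ℝ ∞ (fun x : Fin m → ℝ => x j) := contDiff_apply ℝ ℝ j
    exact ((ht.neg.mul contDiff_const).exp).mul this
  have dt : ∀ x, HasFDerivAt t (fderiv ℝ t x) x := fun x => (ht.differentiable (by simp) x).hasFDerivAt
  have dy : ∀ x u j, fderiv ℝ y x u j = Real.exp (- t x * w j) * (u j - fderiv ℝ t x u * (w j * x j)) := by
    intro x u j
    have h1 : HasFDerivAt (fun x : Fin m → ℝ => x j) (ContinuousLinearMap.proj j : (Fin m → ℝ) →L[ℝ] ℝ) x :=
      (ContinuousLinearMap.proj j : (Fin m → ℝ) →L[ℝ] ℝ).hasFDerivAt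
    have h2 := (((dt x).neg.mul_const (w j)).exp).mul h1
    have h3 := hasFDerivAt_pi'.1 (hys.differentiable (by simp) x).hasFDerivAt j
    have h4 := congrArg (fun T => T u) (h3.unique h2)
    simp at h4
    rw [h4]
    ring
  set g : (Fin m → ℝ) → ℝ := fun x => Real.exp (ν * t x) * (ξ (Wd w x₀) / ν + (ξ (y x) - ξ x₀)) with hg
  have hgs : ContDiff ℝ ∞ g := by
    rw [hg]
    have : ContDiff ℝ ∞ fun x => ξ (y x) := ξ.contDiff.comp hys
    exact ((contDiff_const.mul ht).exp).mul (contDiff_const.add (this.sub contDiff_const))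
  have dgf : ∀ x u, fderiv ℝ g x u = ν * fderiv ℝ t x u * g x + Real.exp (ν * t x) * ξ (fderiv ℝ y x u) := by
    intro x u
    have h1 : HasFDerivAt (fun x => ξ (y x)) (ξ.comp (fderiv ℝ y x)) x :=
      comp_f ξ.hasFDerivAt (hys.differentiable (by simp) x).hasFDerivAt
    have h2 : HasFDerivAt g _ x := (((dt x).const_mul ν).exp).mul ((h1.sub_const (ξ x₀)).const_add (ξ (Wd w x₀) / ν))
    rw [h2.fderiv]
    simp [hg]
    ring
  refine ⟨g, hgs, ?_, ?_⟩
  · ext1 u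
    have h1 : fderiv ℝ y x₀ u = u - fderiv ℝ t x₀ u • Wd w x₀ := by
      ext j
      rw [dy, ht0]
      simp [Wd_apply]
    have h2 : y x₀ = x₀ := by ext j; simp [hy, ht0]
    rw [dgf, h1, map_sub, map_smul]
    simp [hg, ht0, h2]
    field_simp
    ring
  · filter_upwards [htW] with x hx
    have h1 : fderiv ℝ y x (Wd w x) = 0 := by
      ext j
      rw [dy, hx]
      simp [Wd_apply]
    rw [dgf, h1, hx]
    simp

lemma curvefn (w x₀ : Fin m → ℝ) {t : (Fin m → ℝ) → ℝ} (ht : ContDiff ℝ ∞ t) (ht0 : t x₀ = 0)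
    (htW : ∀ᶠ x in 𝓝 x₀, fderiv ℝ t x (Wd w x) = 1) : ∃ c : (Fin m → ℝ) → (Fin m → ℝ),
      ContDiff ℝ ∞ c ∧ c x₀ = x₀ ∧ (∀ᶠ x in 𝓝 x₀, fderiv ℝ c x (Wd w x) = Wd w (c x)) ∧
      ∀ x, ∃ (l : (Fin m → ℝ) → ℝ) (z : Fin m → ℝ), ∀ u, fderiv ℝ c x u = l u • z := by
  set c : (Fin m → ℝ) → (Fin m → ℝ) := fun x j => Real.exp (t x * w j) * x₀ j with hc
  have hcs : ContDiff ℝ ∞ c := by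
    rw [contDiff_pi]
    intro j
    exact ((ht.mul contDiff_const).exp).mul contDiff_const
  have dt : ∀ x, HasFDerivAt t (fderiv ℝ t x) x := fun x => (ht.differentiable (by simp) x).hasFDerivAt
  have dc : ∀ x u, fderiv ℝ c x u = fderiv ℝ t x u • Wd w (c x) := by
    intro x u
    ext j
    have h2 := (((dt x).mul_const (w j)).exp).mul_const (x₀ j)
    have h3 := hasFDerivAt_pi'.1 (hcs.differentiable (by simp) x).hasFDerivAt j
    have h4 := congrArg (fun T => T u) (h3.unique h2)
    simp at h4
    rw [h4]
    simp [Wd_apply, hc]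
    ring
  refine ⟨c, hcs, by ext j; simp [hc, ht0], ?_, fun x => ⟨_, _, dc x⟩⟩
  filter_upwards [htW] with x hx
  rw [dc, hx, one_smul]

theorem model (w : Fin (2 * r) → ℝ) (wt : ℝ) (x₀ : Fin (2 * r) → ℝ)
    (B : (Fin (2 * r) → ℝ) →L[ℝ] (Fin (2 * r) → ℝ) →L[ℝ] ℝ)
    (halt : ∀ u v, B u v = - B v u) (hnd : ∀ v, (∀ u, B v u = 0) → v = 0)
    (hhom : Wd w x₀ = 0 → ∀ u v, B (Wd w u) v + B u (Wd w v) = wt * B u v) :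
    ∃ (lam mu : Fin r → ℝ) (q p : Fin r → (Fin (2 * r) → ℝ) → ℝ)
      (c : (Fin (2 * r) → ℝ) → (Fin (2 * r) → ℝ)),
      (∀ i, ContDiff ℝ ∞ (q i)) ∧ (∀ i, ContDiff ℝ ∞ (p i)) ∧ (∀ i, mu i + lam i = wt) ∧
      (∀ᶠ x in 𝓝 x₀, ∀ i, fderiv ℝ (q i) x (Wd w x) = lam i * q i x) ∧
      (∀ᶠ x in 𝓝 x₀, ∀ i, fderiv ℝ (p i) x (Wd w x) = mu i * p i x) ∧
      frm q p x₀ = B ∧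
      ContDiff ℝ ∞ c ∧ c x₀ = x₀ ∧ (∀ᶠ x in 𝓝 x₀, fderiv ℝ c x (Wd w x) = Wd w (c x)) ∧
      ∀ x, ∃ (l : (Fin (2 * r) → ℝ) → ℝ) (z : Fin (2 * r) → ℝ), ∀ u, fderiv ℝ c x u = l u • z := by
  by_cases h : Wd w x₀ = 0
  · obtain ⟨lam, mu, q, p, h1, h2, h3, h4⟩ := linNormal w wt r Finset.univ B (by simp) halt (hhom h)
      (by simp) (fun u _ hu => hnd u hu)
    refine ⟨lam, mu, fun i => q i, fun i => p i, fun _ => x₀, fun i => (q i).contDiff,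
      fun i => (p i).contDiff, h1, ?_, ?_, ?_, contDiff_const, rfl, ?_, ?_⟩
    · exact Eventually.of_forall fun x i => by simp [h2]
    · exact Eventually.of_forall fun x i => by simp [h3]
    · ext1 u
      ext1 v
      rw [frm_apply, h4]
      simp
    · exact Eventually.of_forall fun x => by simp [h]
    · intro x
      exact ⟨0, 0, fun u => by simp⟩
  · obtain ⟨k, hk⟩ := Function.ne_iff.1 h
    obtain ⟨t, t1, t2, t3⟩ := timefn w x₀ k hk
    obtain ⟨_, _, q, p, -, -, -, h4⟩ := linNormal (0 : Fin (2 * r) → ℝ) 0 r Finset.univ B (by simp) halt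
      (fun u v => by
        have : ∀ u, Wd (0 : Fin (2 * r) → ℝ) u = 0 := fun u => by ext j; simp [Wd_apply]
        simp [this])
      (by simp) (fun u _ hu => hnd u hu)
    obtain ⟨ν, hν⟩ : ∃ ν : ℝ, ν ≠ 0 ∧ wt - ν ≠ 0 := by
      by_cases h1 : wt = 1
      · exact ⟨2, by norm_num, by rw [h1]; norm_num⟩
      · exact ⟨1, by norm_num, sub_ne_zero.2 h1⟩
    choose Q hQ1 hQ2 hQ3 using fun i => homfn w x₀ t1 t2 t3 ν hν.1 (q i)
    choose P hP1 hP2 hP3 using fun i => homfn w x₀ t1 t2 t3 (wt - ν) hν.2 (p i)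
    obtain ⟨c, c1, c2, c3, c4⟩ := curvefn w x₀ t1 t2 t3
    refine ⟨fun _ => ν, fun _ => wt - ν, Q, P, c, hQ1, hP1, fun _ => by ring,
      eventually_all.2 hQ3, eventually_all.2 hP3, ?_, c1, c2, c3, c4⟩
    ext1 u
    ext1 v
    rw [frm_apply, h4]
    simp [hQ2, hP2]

end model
end HD

namespace HD

lemma sub_fd {E : Type} [NormedAddCommGroup E] [NormedSpace ℝ E] {a b : E → E →L[ℝ] E →L[ℝ] ℝ}
    (ha : ContDiff ℝ ∞ a) (hb : ContDiff ℝ ∞ b) (x u v z : E) :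
    fderiv ℝ (fun y => a y - b y) x u v z = fderiv ℝ a x u v z - fderiv ℝ b x u v z := by
  have h1 := (ha.differentiable (by simp) x).hasFDerivAt.sub (hb.differentiable (by simp) x).hasFDerivAt
  have h2 : fderiv ℝ (fun y => a y - b y) x = _ := h1.fderiv
  rw [h2]
  rfl

set_option maxHeartbeats 1000000 in
theorem main (r : ℕ) (w : Fin (2 * r) → ℝ) (wt : ℝ)
    (U : Set (Fin (2 * r) → ℝ)) (hU : IsOpen U)
    (Ω₁ : (Fin (2 * r) → ℝ) → (Fin (2 * r) → ℝ) →L[ℝ] (Fin (2 * r) → ℝ) →L[ℝ] ℝ)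
    (hsm : ContDiffOn ℝ (⊤ : ℕ∞) Ω₁ U)
    (halt : ∀ x ∈ U, ∀ u v, Ω₁ x u v = - Ω₁ x v u)
    (hclosed : ∀ x ∈ U, ∀ u v z,
      fderiv ℝ Ω₁ x u v z + fderiv ℝ Ω₁ x v z u + fderiv ℝ Ω₁ x z u v = 0)
    (hnd : ∀ x ∈ U, ∀ v, (∀ u, Ω₁ x v u = 0) → v = 0)
    (hhom : ∀ x ∈ U, ∀ u v,
      fderiv ℝ Ω₁ x (fun j => w j * x j) u v
        + Ω₁ x (fun j => w j * u j) v + Ω₁ x u (fun j => w j * v j) = wt * Ω₁ x u v)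
    (x₀ : Fin (2 * r) → ℝ) (hx₀ : x₀ ∈ U) :
    ∃ (V : Set (Fin (2 * r) → ℝ)) (lam mu : Fin r → ℝ)
      (q p : Fin r → (Fin (2 * r) → ℝ) → ℝ),
      IsOpen V ∧ x₀ ∈ V ∧ V ⊆ U ∧
      (∀ i, ContDiffOn ℝ (⊤ : ℕ∞) (q i) V) ∧ (∀ i, ContDiffOn ℝ (⊤ : ℕ∞) (p i) V) ∧
      (∀ y ∈ V, LinearIndependent ℝ
        (Sum.elim (fun i => fderiv ℝ (q i) y) (fun i => fderiv ℝ (p i) y) :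
          Fin r ⊕ Fin r → (Fin (2 * r) → ℝ) →L[ℝ] ℝ)) ∧
      (∀ i, ∀ y ∈ V, fderiv ℝ (q i) y (fun j => w j * y j) = lam i * q i y) ∧
      (∀ i, ∀ y ∈ V, fderiv ℝ (p i) y (fun j => w j * y j) = mu i * p i y) ∧
      (∀ y ∈ V, ∀ u v, Ω₁ y u v =
        ∑ i, (fderiv ℝ (p i) y u * fderiv ℝ (q i) y v
          - fderiv ℝ (p i) y v * fderiv ℝ (q i) y u)) := by
  obtain ⟨Ω, hΩ, hΩe⟩ := extend_pt hU hsm hx₀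
  have hUn : ∀ᶠ x in 𝓝 x₀, x ∈ U := hU.mem_nhds hx₀
  have hΩd := hΩe.fderiv (𝕜 := ℝ)
  have haltΩ : ∀ᶠ x in 𝓝 x₀, ∀ u v, Ω x u v = - Ω x v u := by
    filter_upwards [hUn, hΩe] with x h1 h2
    rw [h2]; exact halt x h1
  have hclΩ : ∀ᶠ x in 𝓝 x₀, ∀ u v z,
      fderiv ℝ Ω x u v z + fderiv ℝ Ω x v z u + fderiv ℝ Ω x z u v = 0 := by
    filter_upwards [hUn, hΩd] with x h1 h2
    rw [h2]; exact hclosed x h1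
  have hhomΩ : ∀ᶠ x in 𝓝 x₀, ∀ u v,
      fderiv ℝ Ω x (Wd w x) u v + Ω x (Wd w u) v + Ω x u (Wd w v) = wt * Ω x u v := by
    filter_upwards [hUn, hΩd, hΩe] with x h1 h2 h3
    rw [h2, h3]; exact hhom x h1
  have hΩ0 : Ω x₀ = Ω₁ x₀ := hΩe.self_of_nhds
  have hndΩ : ∀ v, (∀ u, Ω x₀ v u = 0) → v = 0 := by
    rw [hΩ0]; exact hnd x₀ hx₀
  obtain ⟨lam, mu, q, p, c, hq, hp, hw, hqW, hpW, hfrm, hc, hc0, hcW, hcl⟩ :=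
    model w wt x₀ (Ω x₀) haltΩ.self_of_nhds hndΩ (fun h0 u v => by
      have := hhomΩ.self_of_nhds u v
      simpa [h0] using this)
  have hfs := smooth_frm hq hp
  set σ : (Fin (2 * r) → ℝ) → (Fin (2 * r) → ℝ) →L[ℝ] (Fin (2 * r) → ℝ) →L[ℝ] ℝ :=
    fun x => frm q p x - Ω x with hσd
  have hσ : ContDiff ℝ ∞ σ := hfs.sub hΩ
  have dσ : ∀ x u v z, fderiv ℝ σ x u v z = fderiv ℝ (frm q p) x u v z - fderiv ℝ Ω x u v z :=
    sub_fd hfs hΩ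
  have σa : ∀ x u v, σ x u v = frm q p x u v - Ω x u v := fun _ _ _ => rfl
  have hσ0 : σ x₀ = 0 := by
    ext1 u
    ext1 v
    rw [σa, hfrm, sub_self]
    rfl
  have haltσ : ∀ᶠ x in 𝓝 x₀, ∀ u v, σ x u v = - σ x v u := by
    filter_upwards [haltΩ] with x h1 u v
    have : frm q p x u v = - frm q p x v u := by
      rw [frm_apply, frm_apply, ← Finset.sum_neg_distrib]
      exact Finset.sum_congr rfl fun i _ => by ring
    simp only [hσd, ContinuousLinearMap.sub_apply]
    rw [this, h1 u v]; ring
  have hclσ : ∀ᶠ x in 𝓝 x₀, ∀ u v z,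
      fderiv ℝ σ x u v z + fderiv ℝ σ x v z u + fderiv ℝ σ x z u v = 0 := by
    filter_upwards [hclΩ] with x h1 u v z
    have h2 := frm_closed hq hp x u v z
    have h3 := h1 u v z
    simp only [dσ]
    linarith
  have hhomσ : ∀ᶠ x in 𝓝 x₀, ∀ u v,
      fderiv ℝ σ x (Wd w x) u v + σ x (Wd w u) v + σ x u (Wd w v) = wt * σ x u v := by
    filter_upwards [hhomΩ, hqW.eventually_nhds, hpW.eventually_nhds] with x h1 e1 e2 u v
    have h2 := frm_hom (Wd w) wt hq hp hw e1 e2 u v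
    have h3 := h1 u v
    simp only [dσ, σa]
    linarith
  have hcc : ∀ᶠ x in 𝓝 x₀, ∀ u v, σ (c x) (fderiv ℝ c x u) (fderiv ℝ c x v) = 0 := by
    have hct : Tendsto c (𝓝 x₀) (𝓝 x₀) := by
      have := hc.continuous.tendsto x₀
      rwa [hc0] at this
    filter_upwards [hct.eventually haltσ] with x h1 u v
    obtain ⟨l, z, hlz⟩ := hcl x
    have h2 : σ (c x) z z = 0 := by linarith [h1 z z]
    rw [hlz, hlz]
    simp [h2]
  obtain ⟨α, hα, hα0, hα1, hdα, hhomα⟩ := primitive (Wd w) wt x₀ σ c hσ hc haltσ hclσ hhomσ hσ0 hc0 hcW hcc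
  obtain ⟨V, φ, hV, hxV, hφ, hVφ⟩ := moser (Wd w) wt x₀ Ω σ α
    (fun x => x ∈ U ∧ Ω x = Ω₁ x ∧ (∀ i, fderiv ℝ (q i) x (Wd w x) = lam i * q i x) ∧
      (∀ i, fderiv ℝ (p i) x (Wd w x) = mu i * p i x))
    (hUn.and (hΩe.and (hqW.and hpW))) hΩ hσ hα hσ0 hndΩ hα0 hα1 haltΩ haltσ hclΩ hclσ hhomΩ hhomσ hdα hhomα
  have dφ : ∀ y ∈ V, HasFDerivAt φ (fderiv ℝ φ y) y := fun y hy =>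
    ((hφ.contDiffAt (hV.mem_nhds hy)).differentiableAt (by simp)).hasFDerivAt
  have dcomp : ∀ {g : (Fin (2 * r) → ℝ) → ℝ}, ContDiff ℝ ∞ g → ∀ y ∈ V,
      ∀ u, fderiv ℝ (fun x => g (φ x)) y u = fderiv ℝ g (φ y) (fderiv ℝ φ y u) := by
    intro g hg y hy u
    rw [(comp_f (hg.differentiable (by simp) (φ y)).hasFDerivAt (dφ y hy)).fderiv]
    rfl
  have hmain : ∀ y ∈ V, ∀ u v, Ω₁ y u v =
        ∑ i, (fderiv ℝ (fun x => p i (φ x)) y u * fderiv ℝ (fun x => q i (φ x)) y v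
          - fderiv ℝ (fun x => p i (φ x)) y v * fderiv ℝ (fun x => q i (φ x)) y u) := by
    intro y hy u v
    obtain ⟨h1, h2, h3, h4⟩ := hVφ y hy
    have h5 := h4 u v
    rw [h1.2.1] at h5
    rw [← h5, ContinuousLinearMap.add_apply, ContinuousLinearMap.add_apply, σa, add_sub_cancel,
      frm_apply]
    exact Finset.sum_congr rfl fun i _ => by
      rw [dcomp (hp i) y hy, dcomp (hp i) y hy, dcomp (hq i) y hy, dcomp (hq i) y hy]
  refine ⟨V, lam, mu, fun i x => q i (φ x), fun i x => p i (φ x), hV, hxV,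
    fun y hy => (hVφ y hy).1.1, fun i => (hq i).comp_contDiffOn hφ, fun i => (hp i).comp_contDiffOn hφ,
    ?_, ?_, ?_, hmain⟩
  · intro y hy
    apply linIndep
    intro v hv1 hv2
    apply hnd y (hVφ y hy).1.1
    intro u
    rw [hmain y hy]
    refine Finset.sum_eq_zero fun i _ => ?_
    rw [hv1 i, hv2 i]; ring
  · intro i y hy
    obtain ⟨h1, h2, h3, h4⟩ := hVφ y hy
    rw [← Wd_apply, dcomp (hq i) y hy, h3, h2.2.2.1]
  · intro i y hy
    obtain ⟨h1, h2, h3, h4⟩ := hVφ y hy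
    rw [← Wd_apply, dcomp (hp i) y hy, h3, h2.2.2.2]

end HD

end

/-- Darboux theorem for homogeneous symplectic forms (even case): a closed,
pointwise nondegenerate, `∇`-homogeneous 2-form `ω` on an open subset of `ℝ^{2r}` is
`Σᵢ dpᵢ ∧ dqⁱ` in a system of homogeneous Darboux coordinates around any point. -/
theorem stmt_10 (r : ℕ) (w : Fin (2 * r) → ℝ) (wt : ℝ)
    (U : Set (Fin (2 * r) → ℝ)) (hU : IsOpen U)
    (ω : (Fin (2 * r) → ℝ) → (Fin (2 * r) → ℝ) →L[ℝ] (Fin (2 * r) → ℝ) →L[ℝ] ℝ)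
    (hsm : ContDiffOn ℝ (⊤ : ℕ∞) ω U)
    (halt : ∀ x ∈ U, ∀ u v, ω x u v = - ω x v u)
    (hclosed : ∀ x ∈ U, ∀ u v z,
      fderiv ℝ ω x u v z + fderiv ℝ ω x v z u + fderiv ℝ ω x z u v = 0)
    (hnd : ∀ x ∈ U, ∀ v, (∀ u, ω x v u = 0) → v = 0)
    (hhom : ∀ x ∈ U, ∀ u v,
      fderiv ℝ ω x (fun j => w j * x j) u v
        + ω x (fun j => w j * u j) v + ω x u (fun j => w j * v j) = wt * ω x u v)
    (x₀ : Fin (2 * r) → ℝ) (hx₀ : x₀ ∈ U) :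
    ∃ (V : Set (Fin (2 * r) → ℝ)) (lam mu : Fin r → ℝ)
      (q p : Fin r → (Fin (2 * r) → ℝ) → ℝ),
      IsOpen V ∧ x₀ ∈ V ∧ V ⊆ U ∧
      (∀ i, ContDiffOn ℝ (⊤ : ℕ∞) (q i) V) ∧ (∀ i, ContDiffOn ℝ (⊤ : ℕ∞) (p i) V) ∧
      (∀ y ∈ V, LinearIndependent ℝ
        (Sum.elim (fun i => fderiv ℝ (q i) y) (fun i => fderiv ℝ (p i) y) :
          Fin r ⊕ Fin r → (Fin (2 * r) → ℝ) →L[ℝ] ℝ)) ∧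
      (∀ i, ∀ y ∈ V, fderiv ℝ (q i) y (fun j => w j * y j) = lam i * q i y) ∧
      (∀ i, ∀ y ∈ V, fderiv ℝ (p i) y (fun j => w j * y j) = mu i * p i y) ∧
      (∀ y ∈ V, ∀ u v, ω y u v =
        ∑ i, (fderiv ℝ (p i) y u * fderiv ℝ (q i) y v
          - fderiv ℝ (p i) y v * fderiv ℝ (q i) y u)) := by
  exact HD.main r w wt U hU ω hsm halt hclosed hnd hhom x₀ hx₀
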